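/- Every strong Krylov set-valued map 𝒞 : X → 2^𝒫 admits a strong Markov selection, i.e., a measurable selection x ↦ P_x ∈ 𝒞(x) such that for every finite stopping time τ (with respect to the natural filtration), P_x[θ_τ^{-1}(·) | ℱ_τ](w) = P_{π_τ(w)}(·) for P_x-almost all w. -/

import Mathlib

open MeasureTheory Set
open scoped NNReal

noncomputable section

/-- The space `Ω = C([0,∞) → X)` with the compact-open topology. -/
abbrev IPath (X : Type*) [TopologicalSpace X] : Type _ := C(ℝ≥0, X)

variable {X : Type*} [TopologicalSpace X]

/-- The Borel σ-algebra `ℱ` on the path space. -/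
instance : MeasurableSpace (IPath X) := borel _
instance : BorelSpace (IPath X) := ⟨rfl⟩

/-- The natural filtration `ℱ_s` on path space. -/
def natF (X : Type*) [TopologicalSpace X] [MeasurableSpace X] (s : ℝ≥0) :
    MeasurableSpace (IPath X) :=
  ⨆ t ∈ Iic s, MeasurableSpace.comap (fun w : IPath X => w t) inferInstance

/-- A (finite) stopping time with respect to the natural filtration:
`{τ ≤ s} ∈ ℱ_s` for all `s`. -/
def IsStopT {X : Type*} [TopologicalSpace X] [MeasurableSpace X]
    (τ : IPath X → ℝ≥0) : Prop :=
  ∀ s : ℝ≥0, MeasurableSet[natF X s] {w : IPath X | τ w ≤ s}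

/-- Membership in the σ-algebra `ℱ_τ`:
`A ∈ ℱ` with `A ∩ {τ ≤ s} ∈ ℱ_s` for all `s`. -/
def MemFstopT {X : Type*} [TopologicalSpace X] [MeasurableSpace X]
    (τ : IPath X → ℝ≥0) (A : Set (IPath X)) : Prop :=
  MeasurableSet A ∧
    ∀ s : ℝ≥0, MeasurableSet[natF X s] (A ∩ {w : IPath X | τ w ≤ s})

/-- The random shift `θ_τ : w(·) ↦ w(τ(w) + ·)`. -/
def shiftAt (τ : IPath X → ℝ≥0) (w : IPath X) : IPath X :=
  w.comp ⟨fun t => τ w + t, by fun_prop⟩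

/-- The coordinate map `π_τ(w) = w(τ(w))`. -/
def piAt (τ : IPath X → ℝ≥0) (w : IPath X) : X := w (τ w)

/-- Convexity of a set of probability measures. -/
def ConvexMeasSet {Ω' : Type*} [MeasurableSpace Ω']
    (C : Set (ProbabilityMeasure Ω')) : Prop :=
  ∀ P ∈ C, ∀ Q ∈ C, ∀ a b : ℝ≥0, a + b = 1 →
    ∀ R : ProbabilityMeasure Ω',
      (R : Measure Ω') = a • (P : Measure Ω') + b • (Q : Measure Ω') → R ∈ C

/-- `Q f = ∫ f dQ` for a bounded continuous `f` on path space. -/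
def intBCF (f : BoundedContinuousFunction (IPath X) ℝ)
    (Q : ProbabilityMeasure (IPath X)) : ℝ :=
  ∫ w, f w ∂(Q : Measure (IPath X))

/-- The support function `h_x[f] = sup {P f : P ∈ 𝒞 x}`. -/
def hSupp (C : X → Set (ProbabilityMeasure (IPath X))) (x : X)
    (f : BoundedContinuousFunction (IPath X) ℝ) : ℝ :=
  sSup (intBCF f '' C x)

/-- The set `K(P, τ, 𝒞) = {Q : Q f ≤ ∫ h_{π_τ(w)}[f] dP, ∀ f ∈ C_b(Ω)}`. -/
def KsetT (C : X → Set (ProbabilityMeasure (IPath X)))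
    (P : ProbabilityMeasure (IPath X)) (τ : IPath X → ℝ≥0) :
    Set (ProbabilityMeasure (IPath X)) :=
  {Q | ∀ f : BoundedContinuousFunction (IPath X) ℝ,
    intBCF f Q ≤ ∫ w, hSupp C (piAt τ w) f ∂(P : Measure (IPath X))}

/-- The truncated functional
`ζ_n^τ(P) = ∫_Ω ∫₀^{τ(w)} e^{-λ_n t} φ_n(w(t)) dt P(dw)`. -/
def zetaT (lam : ℝ) (phi : X → ℝ) (τ : IPath X → ℝ≥0)
    (P : ProbabilityMeasure (IPath X)) : ℝ :=
  ∫ w, (∫ t in Ioc (0 : ℝ) ((τ w : ℝ≥0) : ℝ),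
    Real.exp (-lam * t) * phi (w (Real.toNNReal t))) ∂(P : Measure (IPath X))

/-- `θ_τ Q = R` at the level of measures: `R` is the push-forward of `Q` by the
random shift `θ_τ`. -/
def IsShiftAtOf (τ : IPath X → ℝ≥0)
    (Q R : ProbabilityMeasure (IPath X)) : Prop :=
  (R : Measure (IPath X)) = Measure.map (shiftAt τ) (Q : Measure (IPath X))

/-- The set `Γ[P, x, τ](𝒞) = {Q ∈ 𝒞(x) : θ_τ Q ∈ K(P, τ, 𝒞), ζ_n^τ(Q) ≥ ζ_n^τ(P) ∀n}`. -/
def GammaT (C : X → Set (ProbabilityMeasure (IPath X)))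
    (lam : ℕ → ℝ) (phi : ℕ → X → ℝ)
    (P : ProbabilityMeasure (IPath X)) (x : X) (τ : IPath X → ℝ≥0) :
    Set (ProbabilityMeasure (IPath X)) :=
  {Q | Q ∈ C x ∧ (∃ R, IsShiftAtOf τ Q R ∧ R ∈ KsetT C P τ) ∧
    ∀ n, zetaT (lam n) (phi n) τ P ≤ zetaT (lam n) (phi n) τ Q}

/-- A **strong Krylov set-valued map**: nonempty compact convex values, measurable,
`P(Ω_x) = 1` for `P ∈ 𝒞(x)`, and for every `x`, `P ∈ 𝒞(x)` and every positive
stopping time `τ`: `θ_τ P ∈ K(P, τ, 𝒞)` and `θ_τ(Γ[P, x, τ](𝒞)) = K(P, τ, 𝒞)`. -/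
def IsStrongKrylov {X : Type*} [TopologicalSpace X] [MeasurableSpace X]
    (C : X → Set (ProbabilityMeasure (IPath X)))
    (lam : ℕ → ℝ) (phi : ℕ → X → ℝ) : Prop :=
  (∀ x, (C x).Nonempty ∧ IsCompact (C x) ∧ ConvexMeasSet (C x)) ∧
  (∀ K : Set (ProbabilityMeasure (IPath X)), IsClosed K →
    MeasurableSet {x | (C x ∩ K).Nonempty}) ∧
  (∀ x, ∀ P ∈ C x, (P : Measure (IPath X)) {w : IPath X | w 0 = x} = 1) ∧
  (∀ x, ∀ P ∈ C x, ∀ τ : IPath X → ℝ≥0, IsStopT τ → (∀ w, 0 < τ w) →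
    ∃ R, IsShiftAtOf τ P R ∧ R ∈ KsetT C P τ) ∧
  (∀ x, ∀ P ∈ C x, ∀ τ : IPath X → ℝ≥0, IsStopT τ → (∀ w, 0 < τ w) →
    ∀ R : ProbabilityMeasure (IPath X),
      (R ∈ KsetT C P τ ↔ ∃ Q ∈ GammaT C lam phi P x τ, IsShiftAtOf τ Q R))

/-- The properties of the data `(λ_n, φ_n)`: an enumeration of `Λ × Φ` where
`Λ ⊆ (0,∞)` is dense in `(0,∞)` and `Φ` is a countable family of bounded continuous
functions on `X` that strongly separates points and is closed under multiplication. -/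
def GoodData {X : Type*} [TopologicalSpace X] (lam : ℕ → ℝ) (phi : ℕ → X → ℝ) : Prop :=
  (∀ n, 0 < lam n) ∧
  (Ioi (0 : ℝ) ⊆ closure (range lam)) ∧
  (∀ n, Continuous (phi n)) ∧
  (∀ n, ∃ M, ∀ y, |phi n y| ≤ M) ∧
  (∀ x : X, ∀ V ∈ nhds x, ∃ n, ∃ ε > 0, ∀ y ∉ V, ε ≤ |phi n x - phi n y|) ∧
  (∀ m n, ∃ k, phi k = fun y => phi m y * phi n y) ∧
  (∀ m n, ∃ k, lam k = lam m ∧ phi k = phi n)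

section KrylovProof

set_option linter.unusedSectionVars false
open Filter Topology ProbabilityTheory BoundedContinuousFunction
open scoped ENNReal

section basics

instance instPolishIPath [PolishSpace X] : PolishSpace (IPath X) := by
  let := TopologicalSpace.upgradeIsCompletelyMetrizable X
  have : TopologicalSpace.IsCompletelyMetrizableSpace (IPath X) :=
    TopologicalSpace.IsCompletelyMetrizableSpace.of_completeSpace_metrizable
  infer_instance

variable [PolishSpace X] [MeasurableSpace X] [BorelSpace X]

lemma continuous_ev (t : ℝ≥0) : Continuous (fun w : IPath X => w t) :=
  by fun_prop

lemma measurable_ev (t : ℝ≥0) : Measurable (fun w : IPath X => w t) :=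
  (continuous_ev t).measurable

lemma measurable_to_path {α : Type*} [MeasurableSpace α] {f : α → IPath X}
    (hf : ∀ t, Measurable (fun a => f a t)) : Measurable f := by
  let e : IPath X → (ℕ → X) := fun w n => w (TopologicalSpace.denseSeq ℝ≥0 n)
  have hc : Continuous e := continuous_pi fun n => continuous_ev _
  have hi : Function.Injective e := by
    intro v w h
    apply ContinuousMap.ext
    intro t
    have := (TopologicalSpace.denseRange_denseSeq ℝ≥0).equalizer v.continuous w.continuous
      (funext fun n => congrFun h n)
    exact congrFun this t
  have := hc.measurableEmbedding hi
  rw [← this.measurable_comp_iff]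
  exact measurable_pi_lambda _ fun n => hf _

lemma natF_le (s : ℝ≥0) : natF X s ≤ (inferInstance : MeasurableSpace (IPath X)) := by
  unfold natF
  refine iSup₂_le fun t _ => ?_
  exact (measurable_ev t).comap_le

lemma natF_mono {s t : ℝ≥0} (h : s ≤ t) : natF X s ≤ natF X t := by
  unfold natF
  refine iSup₂_le fun r hr => ?_
  exact le_iSup₂_of_le r (le_trans hr h) le_rfl

lemma measurable_ev_natF {t s : ℝ≥0} (h : t ≤ s) :
    Measurable[natF X s] (fun w : IPath X => w t) := by
  rw [measurable_iff_comap_le]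
  unfold natF
  exact le_iSup₂_of_le t h le_rfl

lemma measurable_to_natF {α : Type*} {m : MeasurableSpace α} {s : ℝ≥0} {f : α → IPath X}
    (hf : ∀ t ≤ s, Measurable (fun a => f a t)) : Measurable[m, natF X s] f := by
  rw [measurable_iff_comap_le]
  unfold natF
  rw [MeasurableSpace.comap_iSup]
  refine iSup_le fun t => ?_
  rw [MeasurableSpace.comap_iSup]
  refine iSup_le fun ht => ?_
  rw [MeasurableSpace.comap_comp]
  exact (hf t ht).comap_le

lemma IsStopT.measurable {τ : IPath X → ℝ≥0} (h : IsStopT τ) : Measurable τ :=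
  measurable_of_Iic fun s => natF_le s _ (h s)

lemma measurable_ev_joint : Measurable (fun p : ℝ≥0 × IPath X => p.2 p.1) := by
  have : Continuous (fun p : ℝ≥0 × IPath X => p.2 p.1) := by fun_prop
  exact this.measurable

lemma measurable_piAt {τ : IPath X → ℝ≥0} (h : Measurable τ) : Measurable (piAt τ) :=
  measurable_ev_joint.comp (h.prodMk measurable_id)

lemma shiftAt_apply (τ : IPath X → ℝ≥0) (w : IPath X) (t : ℝ≥0) :
    shiftAt τ w t = w (τ w + t) := rfl

lemma measurable_shiftAt {τ : IPath X → ℝ≥0} (h : Measurable τ) : Measurable (shiftAt τ) := by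
  refine measurable_to_path fun t => ?_
  exact measurable_ev_joint.comp ((h.add_const t).prodMk measurable_id)

/-- constants are stopping times -/
lemma isStopT_const (t : ℝ≥0) : IsStopT (fun _ : IPath X => t) := by
  intro s
  exact MeasurableSet.const _

/-- Sets in `natF` only depend on the path up to time `s`. -/
lemma natF_mem_iff {s : ℝ≥0} {A : Set (IPath X)} (hA : MeasurableSet[natF X s] A)
    {v w : IPath X} (h : ∀ t ≤ s, v t = w t) : v ∈ A ↔ w ∈ A := by
  let m : MeasurableSpace (IPath X) :=
    MeasurableSpace.comap (fun (w : IPath X) (r : Iic s) => w r) MeasurableSpace.pi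
  have hle : natF X s ≤ m := by
    unfold natF
    refine iSup₂_le fun t ht => ?_
    have : (fun w : IPath X => w t) =
      (fun g : Iic s → X => g ⟨t, ht⟩) ∘ (fun (w : IPath X) (r : Iic s) => w r) := rfl
    rw [this, ← MeasurableSpace.comap_comp]
    exact MeasurableSpace.comap_mono (measurable_pi_apply _).comap_le
  obtain ⟨B, -, rfl⟩ := hle A hA
  have : (fun r : Iic s => v r) = fun r : Iic s => w r := funext fun r => h r r.2
  simp only [mem_preimage, this]

end basics

section sep

lemma ext_of_submonoid {E : Type*} [TopologicalSpace E] [PolishSpace E] [MeasurableSpace E]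
    [BorelSpace E] {P P' : Measure E} [IsFiniteMeasure P] [IsFiniteMeasure P']
    (M : Submonoid (E →ᵇ ℝ)) (hsep : ∀ x y, x ≠ y → ∃ f ∈ M, f x ≠ f y)
    (heq : ∀ f ∈ M, ∫ x, f x ∂P = ∫ x, f x ∂P') : P = P' := by
  let A0 : Subalgebra ℝ (E →ᵇ ℝ) := Algebra.adjoin ℝ (M : Set (E →ᵇ ℝ))
  let A : StarSubalgebra ℝ (E →ᵇ ℝ) :=
    { A0 with star_mem' := fun {a} ha => by
                  have : star a = a := by ext x; simp
                  rw [this]; exact ha }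
  have hA : ∀ g, g ∈ A ↔ g ∈ A0 := fun g => Iff.rfl
  refine ext_of_forall_mem_subalgebra_integral_eq_of_polish (𝕜 := ℝ) (A := A) ?_ ?_
  · intro x y hxy
    obtain ⟨f, hf, hne⟩ := hsep x y hxy
    refine ⟨f, ⟨f.toContinuousMap, ?_, rfl⟩, hne⟩
    refine ⟨f, ?_, rfl⟩
    exact Algebra.subset_adjoin hf
  · intro g hg
    have hg' : g ∈ Submodule.span ℝ (M : Set (E →ᵇ ℝ)) := by
      have : g ∈ Subalgebra.toSubmodule A0 := hg
      rw [Algebra.adjoin_eq_span, Submonoid.closure_eq] at this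
      exact this
    clear hg
    induction hg' using Submodule.span_induction with
    | mem f hf => exact heq f hf
    | zero => simp
    | add f g hf hg h1 h2 =>
      simp only [BoundedContinuousFunction.coe_add, Pi.add_apply]
      rw [integral_add (f.integrable P) (g.integrable P),
        integral_add (f.integrable P') (g.integrable P'), h1, h2]
    | smul c f hf h1 =>
      simp only [BoundedContinuousFunction.coe_smul, smul_eq_mul]
      rw [integral_const_mul, integral_const_mul, h1]

end sep

section nice

variable [PolishSpace X] [MeasurableSpace X] [BorelSpace X]

/-- nonempty compact valued measurable maps -/
structure NiceMap (C : X → Set (ProbabilityMeasure (IPath X))) : Prop where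
  ne : ∀ x, (C x).Nonempty
  cpt : ∀ x, IsCompact (C x)
  meas : ∀ K, IsClosed K → MeasurableSet {x | (C x ∩ K).Nonempty}

lemma continuous_intBCF (f : (IPath X) →ᵇ ℝ) : Continuous (intBCF f) :=
  ProbabilityMeasure.continuous_integral_boundedContinuousFunction f

lemma abs_intBCF_le (f : (IPath X) →ᵇ ℝ) (P : ProbabilityMeasure (IPath X)) :
    |intBCF f P| ≤ ‖f‖ :=
  BoundedContinuousFunction.norm_integral_le_norm (P : Measure (IPath X)) f

lemma NiceMap.exists_max {C : X → Set (ProbabilityMeasure (IPath X))} (hC : NiceMap C) (x : X)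
    (f : (IPath X) →ᵇ ℝ) : ∃ P ∈ C x, intBCF f P = hSupp C x f := by
  obtain ⟨P, hP, hmax⟩ := (hC.cpt x).exists_isMaxOn (hC.ne x) (continuous_intBCF f).continuousOn
  refine ⟨P, hP, ?_⟩
  have : IsGreatest (intBCF f '' C x) (intBCF f P) :=
    ⟨mem_image_of_mem _ hP, by rintro _ ⟨Q, hQ, rfl⟩; exact hmax hQ⟩
  exact this.csSup_eq.symm

lemma le_hSupp {C : X → Set (ProbabilityMeasure (IPath X))} {x : X}
    {P : ProbabilityMeasure (IPath X)} (hP : P ∈ C x) (f : (IPath X) →ᵇ ℝ) :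
    intBCF f P ≤ hSupp C x f := by
  refine le_csSup ⟨‖f‖, ?_⟩ (mem_image_of_mem _ hP)
  rintro _ ⟨Q, -, rfl⟩
  exact (le_abs_self _).trans (abs_intBCF_le f Q)

lemma NiceMap.abs_hSupp_le {C : X → Set (ProbabilityMeasure (IPath X))} (hC : NiceMap C) (x : X)
    (f : (IPath X) →ᵇ ℝ) : |hSupp C x f| ≤ ‖f‖ := by
  obtain ⟨P, -, h⟩ := hC.exists_max x f
  rw [← h]; exact abs_intBCF_le f P

lemma NiceMap.le_hSupp_iff {C : X → Set (ProbabilityMeasure (IPath X))} (hC : NiceMap C) (x : X)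
    (f : (IPath X) →ᵇ ℝ) (q : ℝ) :
    q ≤ hSupp C x f ↔ (C x ∩ {P | q ≤ intBCF f P}).Nonempty := by
  constructor
  · intro h
    obtain ⟨P, hP, h'⟩ := hC.exists_max x f
    exact ⟨P, hP, by simpa [h'] using h⟩
  · rintro ⟨P, hP, h⟩
    exact le_trans h (le_hSupp hP f)

lemma isClosed_ge (f : (IPath X) →ᵇ ℝ) (q : ℝ) : IsClosed {P | q ≤ intBCF f P} :=
  isClosed_le continuous_const (continuous_intBCF f)

lemma NiceMap.measurable_hSupp {C : X → Set (ProbabilityMeasure (IPath X))} (hC : NiceMap C)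
    (f : (IPath X) →ᵇ ℝ) : Measurable (fun x => hSupp C x f) := by
  refine measurable_of_Ici fun q => ?_
  have : (fun x => hSupp C x f) ⁻¹' Ici q = {x | (C x ∩ {P | q ≤ intBCF f P}).Nonempty} := by
    ext x; exact hC.le_hSupp_iff x f q
  rw [this]
  exact hC.meas _ (isClosed_ge f q)

lemma NiceMap.integrable_hSupp {C : X → Set (ProbabilityMeasure (IPath X))} (hC : NiceMap C)
    (f : (IPath X) →ᵇ ℝ) {α : Type*} [MeasurableSpace α] (P : Measure α) [IsFiniteMeasure P]
    {g : α → X} (hg : Measurable g) : Integrable (fun a => hSupp C (g a) f) P :=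
  Integrable.of_bound ((hC.measurable_hSupp f).comp hg).aestronglyMeasurable ‖f‖
    (Eventually.of_forall fun a => hC.abs_hSupp_le _ f)

/-- argmax map -/
def amax (C : X → Set (ProbabilityMeasure (IPath X))) (f : (IPath X) →ᵇ ℝ) (x : X) :
    Set (ProbabilityMeasure (IPath X)) := {P | P ∈ C x ∧ intBCF f P = hSupp C x f}

lemma NiceMap.amax {C : X → Set (ProbabilityMeasure (IPath X))} (hC : NiceMap C)
    (f : (IPath X) →ᵇ ℝ) : NiceMap (amax C f) where
  ne x := by obtain ⟨P, hP, h⟩ := hC.exists_max x f; exact ⟨P, hP, h⟩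
  cpt x := (hC.cpt x).inter_right (isClosed_eq (continuous_intBCF f) continuous_const)
  meas K hK := by
    have : {x | (_root_.amax C f x ∩ K).Nonempty} =
        {x | (C x ∩ K).Nonempty} ∩ ⋂ q : ℚ, ({x | (C x ∩ {P | (q : ℝ) ≤ intBCF f P}).Nonempty}ᶜ ∪
          {x | (C x ∩ (K ∩ {P | (q : ℝ) ≤ intBCF f P})).Nonempty}) := by
      ext x
      simp only [mem_ofPred_eq, mem_inter_iff, mem_iInter, mem_union, mem_compl_iff]
      constructor
      · rintro ⟨P, ⟨hP, hPf⟩, hPK⟩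
        refine ⟨⟨P, hP, hPK⟩, fun q => ?_⟩
        rw [← hC.le_hSupp_iff]
        by_cases h : (q : ℝ) ≤ hSupp C x f
        · exact Or.inr ⟨P, hP, hPK, by simpa [hPf] using h⟩
        · exact Or.inl h
      · rintro ⟨hne, hq⟩
        obtain ⟨P, ⟨hP, hPK⟩, hmax⟩ := ((hC.cpt x).inter_right hK).exists_isMaxOn hne
          (continuous_intBCF f).continuousOn
        refine ⟨P, ⟨hP, le_antisymm (le_hSupp hP f) ?_⟩, hPK⟩
        by_contra hlt
        push Not at hlt
        obtain ⟨q, hq1, hq2⟩ := exists_rat_btwn hlt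
        rcases hq q with h | ⟨Q, hQ, hQK, hQq⟩
        · exact h ((hC.le_hSupp_iff x f q).1 hq2.le)
        · have : intBCF f Q ≤ intBCF f P := hmax ⟨hQ, hQK⟩
          simp only [mem_ofPred_eq] at hQq
          linarith
    rw [this]
    refine (hC.meas K hK).inter (MeasurableSet.iInter fun q => ?_)
    exact (hC.meas _ (isClosed_ge f q)).compl.union (hC.meas _ (hK.inter (isClosed_ge f q)))

lemma NiceMap.iInter {D : ℕ → X → Set (ProbabilityMeasure (IPath X))} (hD : ∀ n, NiceMap (D n))
    (hmono : ∀ n x, D (n + 1) x ⊆ D n x) : NiceMap (fun x => ⋂ n, D n x) := by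
  have key : ∀ K, IsClosed K → ∀ x, (∀ n, (D n x ∩ K).Nonempty) →
      ((⋂ n, D n x) ∩ K).Nonempty := by
    intro K hK x h
    have := IsCompact.nonempty_iInter_of_sequence_nonempty_isCompact_isClosed
      (fun n => D n x ∩ K) (fun n => inter_subset_inter_left _ (hmono n x)) h
      (((hD 0).cpt x).inter_right hK)
      (fun n => ((hD n).cpt x).isClosed.inter hK)
    rwa [← iInter_inter] at this
  refine ⟨fun x => ?_, fun x => ?_, fun K hK => ?_⟩
  · simpa using key univ isClosed_univ x (fun n => by simpa using (hD n).ne x)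
  · exact ((hD 0).cpt x).of_isClosed_subset (isClosed_iInter fun n => ((hD n).cpt x).isClosed)
      (iInter_subset _ 0)
  · have : {x | ((⋂ n, D n x) ∩ K).Nonempty} = ⋂ n, {x | (D n x ∩ K).Nonempty} := by
      ext x
      simp only [mem_ofPred_eq, mem_iInter]
      refine ⟨fun h n => h.mono (inter_subset_inter_left _ (iInter_subset _ n)), key K hK x⟩
    rw [this]
    exact MeasurableSet.iInter fun n => (hD n).meas K hK

/-- lexicographic maximization -/
def lexC (C : X → Set (ProbabilityMeasure (IPath X))) (g : ℕ → (IPath X) →ᵇ ℝ) :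
    ℕ → X → Set (ProbabilityMeasure (IPath X))
  | 0 => C
  | n + 1 => amax (lexC C g n) (g n)

def lexInf (C : X → Set (ProbabilityMeasure (IPath X))) (g : ℕ → (IPath X) →ᵇ ℝ) (x : X) :
    Set (ProbabilityMeasure (IPath X)) := ⋂ n, lexC C g n x

lemma lexC_succ_subset (C : X → Set (ProbabilityMeasure (IPath X))) (g : ℕ → (IPath X) →ᵇ ℝ)
    (n : ℕ) (x : X) : lexC C g (n + 1) x ⊆ lexC C g n x := fun _ h => h.1

lemma NiceMap.lexC {C : X → Set (ProbabilityMeasure (IPath X))} (hC : NiceMap C)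
    (g : ℕ → (IPath X) →ᵇ ℝ) (n : ℕ) : NiceMap (lexC C g n) := by
  induction n with
  | zero => exact hC
  | succ n ih => exact ih.amax (g n)

lemma NiceMap.lexInf {C : X → Set (ProbabilityMeasure (IPath X))} (hC : NiceMap C)
    (g : ℕ → (IPath X) →ᵇ ℝ) : NiceMap (lexInf C g) :=
  NiceMap.iInter (fun n => hC.lexC g n) (lexC_succ_subset C g)

lemma lexInf_eq_hSupp {C : X → Set (ProbabilityMeasure (IPath X))} {g : ℕ → (IPath X) →ᵇ ℝ}
    {x : X} {P : ProbabilityMeasure (IPath X)} (hP : P ∈ lexInf C g x) (n : ℕ) :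
    intBCF (g n) P = hSupp (lexC C g n) x (g n) :=
  (mem_iInter.1 hP (n + 1)).2

lemma exists_sepSeq (E : Type*) [TopologicalSpace E] [PolishSpace E] [MeasurableSpace E]
    [BorelSpace E] : ∃ H : ℕ → E →ᵇ ℝ, ∀ P P' : Measure E, IsFiniteMeasure P → IsFiniteMeasure P' →
      (∀ n, ∫ x, H n x ∂P = ∫ x, H n x ∂P') → P = P' := by
  by_cases hE : Nonempty E
  swap
  · refine ⟨fun _ => 0, fun P P' _ _ _ => ?_⟩
    have : IsEmpty E := not_nonempty_iff.1 hE
    exact Subsingleton.elim _ _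
  let := TopologicalSpace.upgradeIsCompletelyMetrizable E
  let d : ℕ → E →ᵇ ℝ := fun n => BoundedContinuousFunction.ofNormedAddCommGroup
    (fun x => min 1 (dist x (TopologicalSpace.denseSeq E n))) (by fun_prop) 1 (fun x => by
      rw [Real.norm_eq_abs, abs_of_nonneg (le_min zero_le_one dist_nonneg)]
      exact min_le_left _ _)
  let H : ℕ → E →ᵇ ℝ := fun n => ((Denumerable.ofNat (List ℕ) n).map d).prod
  refine ⟨H, fun P P' _ _ h => ?_⟩
  refine ext_of_submonoid (Submonoid.closure (range d)) ?_ ?_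
  · intro x y hxy
    have hpos : 0 < min 1 (dist x y / 2) := lt_min one_pos (half_pos (dist_pos.2 hxy))
    obtain ⟨n, hn⟩ := (TopologicalSpace.denseRange_denseSeq E).exists_dist_lt x hpos
    refine ⟨d n, Submonoid.subset_closure ⟨n, rfl⟩, ?_⟩
    have h1 : d n x < min 1 (dist x y / 2) := by
      refine lt_of_le_of_lt (min_le_right _ _) hn
    have h2 : min 1 (dist x y / 2) ≤ d n y := by
      refine le_min (min_le_left _ _) ?_
      have := dist_triangle x (TopologicalSpace.denseSeq E n) y
      rw [dist_comm y]
      have := min_le_right 1 (dist x y / 2)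
      linarith
    exact (lt_of_lt_of_le h1 h2).ne
  · intro f hf
    obtain ⟨l, hl, rfl⟩ := Submonoid.exists_list_of_mem_closure hf
    choose! k hk using hl
    have : l = (l.map k).map d := by
      rw [List.map_map]
      conv_lhs => rw [← List.map_id l]
      exact List.map_congr_left fun y hy => (hk y hy).symm
    rw [this]
    have := h (Encodable.encode (l.map k))
    simpa only [H, Denumerable.ofNat_encode] using this

lemma measurable_toMeasure {s : X → ProbabilityMeasure (IPath X)}
    (hs : ∀ U, IsOpen U → MeasurableSet (s ⁻¹' U)) :
    Measurable (fun x => (s x : Measure (IPath X))) := by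
  refine Measurable.measure_of_isPiSystem_of_isProbabilityMeasure
    (S := {U | IsOpen U}) (BorelSpace.measurable_eq) isPiSystem_isOpen ?_
  intro U hU
  have hlsc : LowerSemicontinuous (fun P : ProbabilityMeasure (IPath X) =>
      (P : Measure (IPath X)) U) := by
    intro P
    refine lowerSemicontinuousAt_iff_le_liminf.2 ?_
    exact ProbabilityMeasure.le_liminf_measure_open_of_tendsto (L := 𝓝 P) tendsto_id hU
  refine measurable_of_Ioi fun c => ?_
  exact hs _ (hlsc.isOpen_preimage c)

lemma NiceMap.exists_selection {C : X → Set (ProbabilityMeasure (IPath X))} (hC : NiceMap C) :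
    ∃ s : X → ProbabilityMeasure (IPath X), (∀ x, s x ∈ C x) ∧
      (∀ U, IsOpen U → MeasurableSet (s ⁻¹' U)) := by
  obtain ⟨H, hH⟩ := exists_sepSeq (IPath X)
  have hn := hC.lexInf H
  choose s hs using hn.ne
  refine ⟨s, fun x => mem_iInter.1 (hs x) 0, fun U hU => ?_⟩
  have huniq : ∀ x, ∀ P ∈ _root_.lexInf C H x, P = s x := by
    intro x P hP
    refine Subtype.ext (hH (P : Measure (IPath X)) (s x : Measure (IPath X)) inferInstance
      inferInstance fun n => ?_)
    exact (lexInf_eq_hSupp hP n).trans (lexInf_eq_hSupp (hs x) n).symm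
  have : s ⁻¹' U = {x | (_root_.lexInf C H x ∩ Uᶜ).Nonempty}ᶜ := by
    ext x
    simp only [mem_preimage, mem_compl_iff, mem_ofPred_eq]
    constructor
    · rintro h ⟨P, hP, hPU⟩
      rw [huniq x P hP] at hPU
      exact hPU h
    · intro h
      by_contra h'
      exact h ⟨s x, hs x, h'⟩
  rw [this]
  exact (hn.meas _ hU.isClosed_compl).compl

/-- the kernel associated with a measurable selection -/
def selKer (s : X → ProbabilityMeasure (IPath X))
    (hs : Measurable (fun x => (s x : Measure (IPath X)))) : Kernel X (IPath X) :=
  ⟨fun x => (s x : Measure (IPath X)), hs⟩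

instance (s : X → ProbabilityMeasure (IPath X))
    (hs : Measurable (fun x => (s x : Measure (IPath X)))) : IsMarkovKernel (selKer s hs) :=
  ⟨fun x => by change IsProbabilityMeasure (s x : Measure (IPath X)); infer_instance⟩

lemma exists_mix {s : X → ProbabilityMeasure (IPath X)}
    (hs : Measurable (fun x => (s x : Measure (IPath X)))) {α : Type*} [MeasurableSpace α]
    (P : Measure α) [IsProbabilityMeasure P] {g : α → X} (hg : Measurable g) :
    ∃ S : ProbabilityMeasure (IPath X), ∀ f : (IPath X) →ᵇ ℝ,
      intBCF f S = ∫ a, intBCF f (s (g a)) ∂P := by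
  let κ : Kernel α (IPath X) := (selKer s hs).comap g hg
  refine ⟨⟨(P ⊗ₘ κ).snd, inferInstance⟩, fun f => ?_⟩
  unfold intBCF
  simp only [ProbabilityMeasure.coe_mk, Measure.snd]
  rw [integral_map measurable_snd.aemeasurable f.continuous.aestronglyMeasurable,
    Measure.integral_compProd]
  · rfl
  · refine Integrable.of_bound (f.continuous.measurable.comp measurable_snd).aestronglyMeasurable
      ‖f‖ (Eventually.of_forall fun a => f.norm_coe_le_norm _)

lemma mix_mem_K {C : X → Set (ProbabilityMeasure (IPath X))} (hC : NiceMap C)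
    {s : X → ProbabilityMeasure (IPath X)} (hsC : ∀ x, s x ∈ C x)
    (hs : Measurable (fun x => (s x : Measure (IPath X)))) (P : ProbabilityMeasure (IPath X))
    {τ : IPath X → ℝ≥0} (hτ : Measurable τ) {S : ProbabilityMeasure (IPath X)}
    (hS : ∀ f : (IPath X) →ᵇ ℝ, intBCF f S = ∫ w, intBCF f (s (piAt τ w)) ∂(P : Measure (IPath X))) :
    S ∈ KsetT C P τ := by
  intro f
  rw [hS f]
  refine integral_mono ?_ (hC.integrable_hSupp f _ (measurable_piAt hτ)) fun w => le_hSupp (hsC _) f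
  have hm : Measurable (fun x => intBCF f (s x)) := by
    unfold intBCF
    exact (StronglyMeasurable.integral_kernel (κ := selKer s hs) (f := fun w => f w)
      f.continuous.measurable.stronglyMeasurable).measurable
  exact Integrable.of_bound (hm.comp (measurable_piAt hτ)).aestronglyMeasurable ‖f‖
    (Eventually.of_forall fun a => abs_intBCF_le _ _)

lemma measurable_intBCF_sel {s : X → ProbabilityMeasure (IPath X)}
    (hs : Measurable (fun x => (s x : Measure (IPath X)))) (f : (IPath X) →ᵇ ℝ) :
    Measurable (fun x => intBCF f (s x)) := by
  unfold intBCF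
  exact (StronglyMeasurable.integral_kernel (κ := selKer s hs) (f := fun w => f w)
      f.continuous.measurable.stronglyMeasurable).measurable

lemma intBCF_add (f g : (IPath X) →ᵇ ℝ) (P : ProbabilityMeasure (IPath X)) :
    intBCF (f + g) P = intBCF f P + intBCF g P :=
  integral_add (f.integrable _) (g.integrable _)

lemma intBCF_smul (c : ℝ) (g : (IPath X) →ᵇ ℝ) (P : ProbabilityMeasure (IPath X)) :
    intBCF (c • g) P = c * intBCF g P :=
  integral_const_mul _ _

/-- intersection limit -/
lemma hSupp_iInter_tendsto {D : ℕ → X → Set (ProbabilityMeasure (IPath X))}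
    (hD : ∀ n, NiceMap (D n)) (hmono : ∀ n x, D (n + 1) x ⊆ D n x) (x : X) (f : (IPath X) →ᵇ ℝ) :
    Tendsto (fun n => hSupp (D n) x f) atTop (𝓝 (hSupp (fun x => ⋂ n, D n x) x f)) := by
  have hN := NiceMap.iInter hD hmono
  have hge : ∀ n, hSupp (fun x => ⋂ n, D n x) x f ≤ hSupp (D n) x f := by
    intro n
    obtain ⟨P, hP, h⟩ := hN.exists_max x f
    rw [← h]
    exact le_hSupp (mem_iInter.1 hP n) f
  have hanti : Antitone (fun n => hSupp (D n) x f) := by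
    refine antitone_nat_of_succ_le fun n => ?_
    obtain ⟨P, hP, h⟩ := (hD (n + 1)).exists_max x f
    rw [← h]
    exact le_hSupp (hmono n x hP) f
  have hbdd : BddBelow (range fun n => hSupp (D n) x f) := ⟨_, by rintro _ ⟨n, rfl⟩; exact hge n⟩
  have hlim := tendsto_atTop_ciInf hanti hbdd
  set l := ⨅ n, hSupp (D n) x f
  have hl : ∀ n, l ≤ hSupp (D n) x f := fun n => ciInf_le hbdd n
  have := IsCompact.nonempty_iInter_of_sequence_nonempty_isCompact_isClosed
      (fun n => D n x ∩ {P | l ≤ intBCF f P}) (fun n => inter_subset_inter_left _ (hmono n x))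
      (fun n => ((hD n).le_hSupp_iff x f l).1 (hl n))
      (((hD 0).cpt x).inter_right (isClosed_ge f l))
      (fun n => ((hD n).cpt x).isClosed.inter (isClosed_ge f l))
  rw [← iInter_inter] at this
  have h2 : l ≤ hSupp (fun x => ⋂ n, D n x) x f := (hN.le_hSupp_iff x f l).2 this
  have h3 : l = hSupp (fun x => ⋂ n, D n x) x f := le_antisymm h2 (le_ciInf hge)
  rwa [h3] at hlim

/-- face limit -/
lemma hSupp_face_tendsto {C : X → Set (ProbabilityMeasure (IPath X))} (hC : NiceMap C) (x : X)
    (f g : (IPath X) →ᵇ ℝ) :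
    Tendsto (fun k : ℕ => hSupp C x (f + (k : ℝ) • g) - k * hSupp C x g) atTop
      (𝓝 (hSupp (amax C g) x f)) := by
  have hge : ∀ k : ℕ, hSupp (amax C g) x f ≤ hSupp C x (f + (k : ℝ) • g) - k * hSupp C x g := by
    intro k
    obtain ⟨P, hP, h⟩ := (hC.amax g).exists_max x f
    have := le_hSupp hP.1 (f + (k : ℝ) • g)
    rw [intBCF_add, intBCF_smul, h, hP.2] at this
    linarith
  have hanti : Antitone (fun k : ℕ => hSupp C x (f + (k : ℝ) • g) - k * hSupp C x g) := by
    refine antitone_nat_of_succ_le fun k => ?_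
    obtain ⟨P, hP, h⟩ := hC.exists_max x (f + ((k + 1 : ℕ) : ℝ) • g)
    rw [← h]
    have h1 := le_hSupp hP (f + (k : ℝ) • g)
    have h2 := le_hSupp hP g
    rw [intBCF_add, intBCF_smul] at *
    push_cast
    linarith
  have hbdd : BddBelow (range fun k : ℕ => hSupp C x (f + (k : ℝ) • g) - k * hSupp C x g) :=
    ⟨_, by rintro _ ⟨n, rfl⟩; exact hge n⟩
  have hlim := tendsto_atTop_ciInf hanti hbdd
  set l := ⨅ k : ℕ, (hSupp C x (f + (k : ℝ) • g) - k * hSupp C x g)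
  have hl : ∀ k : ℕ, l ≤ hSupp C x (f + (k : ℝ) • g) - k * hSupp C x g := fun n => ciInf_le hbdd n
  let S : ℕ → Set (ProbabilityMeasure (IPath X)) := fun k =>
    C x ∩ {P | l ≤ intBCF f P + k * (intBCF g P - hSupp C x g)}
  have hScl : ∀ k : ℕ, IsClosed {P | l ≤ intBCF f P + k * (intBCF g P - hSupp C x g)} := fun k =>
    isClosed_le continuous_const ((continuous_intBCF f).add
      (continuous_const.mul ((continuous_intBCF g).sub continuous_const)))
  have := IsCompact.nonempty_iInter_of_sequence_nonempty_isCompact_isClosed S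
    (by
      rintro k P ⟨hP, h⟩
      refine ⟨hP, ?_⟩
      have h2 := le_hSupp hP g
      simp only [mem_ofPred_eq] at h ⊢
      push_cast at h
      linarith)
    (by
      intro k
      obtain ⟨P, hP, h⟩ := hC.exists_max x (f + (k : ℝ) • g)
      refine ⟨P, hP, ?_⟩
      have := hl k
      rw [← h, intBCF_add, intBCF_smul] at this
      simp only [mem_ofPred_eq]
      linarith)
    ((hC.cpt x).inter_right (hScl 0)) (fun k => (hC.cpt x).isClosed.inter (hScl k))
  obtain ⟨P, hP⟩ := this
  have hP' : ∀ k : ℕ, l ≤ intBCF f P + k * (intBCF g P - hSupp C x g) :=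
    fun k => (mem_iInter.1 hP k).2
  have hPC : P ∈ C x := (mem_iInter.1 hP 0).1
  have hPg : intBCF g P = hSupp C x g := by
    refine le_antisymm (le_hSupp hPC g) ?_
    by_contra hlt
    push Not at hlt
    obtain ⟨k, hk⟩ := exists_nat_gt ((intBCF f P - l) / (hSupp C x g - intBCF g P))
    rw [div_lt_iff₀ (by linarith)] at hk
    have := hP' k
    nlinarith
  have h2 : l ≤ hSupp (amax C g) x f := by
    have := le_hSupp (C := amax C g) (x := x) ⟨hPC, hPg⟩ f
    have h0 := hP' 0
    simp at h0
    linarith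
  have h3 : l = hSupp (amax C g) x f := le_antisymm h2 (le_ciInf hge)
  rwa [h3] at hlim

lemma K_face {C : X → Set (ProbabilityMeasure (IPath X))} (hC : NiceMap C)
    {P R : ProbabilityMeasure (IPath X)} {τ : IPath X → ℝ≥0} (hτ : Measurable τ)
    (hR : R ∈ KsetT C P τ) (g : (IPath X) →ᵇ ℝ)
    (hg : ∫ w, hSupp C (piAt τ w) g ∂(P : Measure (IPath X)) ≤ intBCF g R) :
    R ∈ KsetT (amax C g) P τ := by
  intro f
  have hlim : Tendsto (fun k : ℕ => ∫ w, (hSupp C (piAt τ w) (f + (k : ℝ) • g)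
      - k * hSupp C (piAt τ w) g) ∂(P : Measure (IPath X))) atTop
      (𝓝 (∫ w, hSupp (amax C g) (piAt τ w) f ∂(P : Measure (IPath X)))) := by
    refine tendsto_integral_of_dominated_convergence (fun _ => ‖f‖) ?_ (integrable_const _) ?_ ?_
    · intro k
      exact ((hC.integrable_hSupp _ _ (measurable_piAt hτ)).sub
        ((hC.integrable_hSupp _ _ (measurable_piAt hτ)).const_mul _)).aestronglyMeasurable
    · intro k
      refine Eventually.of_forall fun w => ?_
      rw [Real.norm_eq_abs, abs_le]
      constructor
      · obtain ⟨Q, hQ, h⟩ := hC.exists_max (piAt τ w) g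
        have := le_hSupp hQ (f + (k : ℝ) • g)
        rw [intBCF_add, intBCF_smul, h] at this
        have := (abs_le.1 (abs_intBCF_le f Q)).1
        linarith
      · obtain ⟨Q, hQ, h⟩ := hC.exists_max (piAt τ w) (f + (k : ℝ) • g)
        rw [← h, intBCF_add, intBCF_smul]
        have h1 := le_hSupp hQ g
        have := (abs_le.1 (abs_intBCF_le f Q)).2
        have : (k : ℝ) * intBCF g Q ≤ k * hSupp C (piAt τ w) g := by gcongr
        linarith
    · exact Eventually.of_forall fun w => hSupp_face_tendsto hC _ f g
  refine ge_of_tendsto hlim (Eventually.of_forall fun k => ?_)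
  rw [integral_sub (hC.integrable_hSupp _ _ (measurable_piAt hτ))
    ((hC.integrable_hSupp _ _ (measurable_piAt hτ)).const_mul _), integral_const_mul]
  have := hR (f + (k : ℝ) • g)
  rw [intBCF_add, intBCF_smul] at this
  have h2 : (k : ℝ) * ∫ w, hSupp C (piAt τ w) g ∂(P : Measure (IPath X)) ≤ k * intBCF g R := by
    gcongr
  linarith

lemma K_iInter {D : ℕ → X → Set (ProbabilityMeasure (IPath X))}
    (hD : ∀ n, NiceMap (D n)) (hmono : ∀ n x, D (n + 1) x ⊆ D n x)
    {P R : ProbabilityMeasure (IPath X)} {τ : IPath X → ℝ≥0} (hτ : Measurable τ)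
    (hR : ∀ n, R ∈ KsetT (D n) P τ) : R ∈ KsetT (fun x => ⋂ n, D n x) P τ := by
  intro f
  have hlim : Tendsto (fun k : ℕ => ∫ w, hSupp (D k) (piAt τ w) f ∂(P : Measure (IPath X))) atTop
      (𝓝 (∫ w, hSupp (fun x => ⋂ n, D n x) (piAt τ w) f ∂(P : Measure (IPath X)))) := by
    refine tendsto_integral_of_dominated_convergence (fun _ => ‖f‖) ?_ (integrable_const _) ?_ ?_
    · exact fun k => ((hD k).integrable_hSupp _ _ (measurable_piAt hτ)).aestronglyMeasurable
    · exact fun k => Eventually.of_forall fun w => (hD k).abs_hSupp_le _ _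
    · exact Eventually.of_forall fun w => hSupp_iInter_tendsto hD hmono _ f
  exact ge_of_tendsto hlim (Eventually.of_forall fun k => hR k f)

end nice

section functionals

variable [PolishSpace X] [MeasurableSpace X] [BorelSpace X]

def Gfun (l : ℝ) (ψ : X →ᵇ ℝ) (w : IPath X) : ℝ :=
  ∫ t in Ioi (0 : ℝ), Real.exp (-l * t) * ψ (w t.toNNReal)

lemma G_bound (l : ℝ) (ψ : X →ᵇ ℝ) (w : IPath X) (t : ℝ) :
    ‖Real.exp (-l * t) * ψ (w t.toNNReal)‖ ≤ Real.exp (-l * t) * ‖ψ‖ := by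
  rw [norm_mul, Real.norm_of_nonneg (Real.exp_pos _).le]
  gcongr
  exact ψ.norm_coe_le_norm _

lemma G_cont (l : ℝ) (ψ : X →ᵇ ℝ) (w : IPath X) :
    Continuous (fun t : ℝ => Real.exp (-l * t) * ψ (w t.toNNReal)) := by
  have := ψ.continuous
  fun_prop

lemma G_dom_int {l : ℝ} (hl : 0 < l) (a M : ℝ) :
    IntegrableOn (fun t => Real.exp (-l * t) * M) (Ioi a) :=
  (exp_neg_integrableOn_Ioi a hl).mul_const M

lemma G_int {l : ℝ} (hl : 0 < l) (ψ : X →ᵇ ℝ) (w : IPath X) (a : ℝ) :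
    IntegrableOn (fun t : ℝ => Real.exp (-l * t) * ψ (w t.toNNReal)) (Ioi a) :=
  Integrable.mono' (G_dom_int hl a ‖ψ‖) (G_cont l ψ w).aestronglyMeasurable
    (Eventually.of_forall (G_bound l ψ w))

lemma continuous_Gfun {l : ℝ} (hl : 0 < l) (ψ : X →ᵇ ℝ) : Continuous (Gfun l ψ) := by
  refine continuous_of_dominated (bound := fun t => Real.exp (-l * t) * ‖ψ‖) ?_ ?_
    (G_dom_int hl 0 ‖ψ‖) ?_
  · exact fun w => (G_cont l ψ w).aestronglyMeasurable
  · exact fun w => Eventually.of_forall (G_bound l ψ w)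
  · refine Eventually.of_forall fun t => ?_
    exact continuous_const.mul (ψ.continuous.comp (continuous_ev _))

/-- The functional `G` as a bounded continuous function. -/
def gB {l : ℝ} (hl : 0 < l) (ψ : X →ᵇ ℝ) : (IPath X) →ᵇ ℝ :=
  BoundedContinuousFunction.ofNormedAddCommGroup (Gfun l ψ) (continuous_Gfun hl ψ)
    (∫ t in Ioi (0 : ℝ), Real.exp (-l * t) * ‖ψ‖) (fun w =>
      norm_integral_le_of_norm_le (G_dom_int hl 0 ‖ψ‖) (Eventually.of_forall (G_bound l ψ w)))

lemma gB_apply {l : ℝ} (hl : 0 < l) (ψ : X →ᵇ ℝ) (w : IPath X) : gB hl ψ w = Gfun l ψ w := rfl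

lemma Gfun_nonneg (l : ℝ) (ψ : X →ᵇ ℝ) (h : ∀ x, 0 ≤ ψ x) (w : IPath X) : 0 ≤ Gfun l ψ w :=
  setIntegral_nonneg measurableSet_Ioi fun _ _ => mul_nonneg (Real.exp_pos _).le (h _)

/-- truncated integral -/
def Jfun (l : ℝ) (ψ : X → ℝ) (σ : ℝ≥0) (w : IPath X) : ℝ :=
  ∫ t in Ioc (0 : ℝ) (σ : ℝ), Real.exp (-l * t) * ψ (w t.toNNReal)

lemma Jfun_nonneg (l : ℝ) (ψ : X → ℝ) (h : ∀ x, 0 ≤ ψ x) (σ : ℝ≥0) (w : IPath X) :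
    0 ≤ Jfun l ψ σ w :=
  setIntegral_nonneg measurableSet_Ioc fun _ _ => mul_nonneg (Real.exp_pos _).le (h _)

lemma zetaT_eq (l : ℝ) (ψ : X → ℝ) (τ : IPath X → ℝ≥0) (P : ProbabilityMeasure (IPath X)) :
    zetaT l ψ τ P = ∫ w, Jfun l ψ (τ w) w ∂(P : Measure (IPath X)) := rfl

/-- shift by a constant -/
def shC (s : ℝ≥0) (w : IPath X) : IPath X := w.comp ⟨fun t => s + t, by fun_prop⟩

lemma shC_apply (s t : ℝ≥0) (w : IPath X) : shC s w t = w (s + t) := rfl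

lemma shiftAt_eq (τ : IPath X → ℝ≥0) (w : IPath X) : shiftAt τ w = shC (τ w) w := rfl

lemma Gfun_decomp {l : ℝ} (hl : 0 < l) (ψ : X →ᵇ ℝ) (σ : ℝ≥0) (w : IPath X) :
    Gfun l ψ w = Jfun l ψ σ w + Real.exp (-l * σ) * Gfun l ψ (shC σ w) := by
  unfold Gfun Jfun
  rw [← Ioc_union_Ioi_eq_Ioi (NNReal.coe_nonneg σ), setIntegral_union Ioc_disjoint_Ioi_same
    measurableSet_Ioi ((G_int hl ψ w 0).mono_set Ioc_subset_Ioi_self) (G_int hl ψ w _)]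
  congr 1
  have := (measurePreserving_add_right volume (σ : ℝ)).setIntegral_preimage_emb
    (measurableEmbedding_addRight (σ : ℝ))
    (fun t : ℝ => Real.exp (-l * t) * ψ (w t.toNNReal)) (Ioi (σ : ℝ))
  rw [← this]
  have hpre : (fun x : ℝ => x + (σ : ℝ)) ⁻¹' Ioi (σ : ℝ) = Ioi 0 := by
    ext x; simp
  rw [hpre, Ioc_union_Ioi_eq_Ioi (NNReal.coe_nonneg σ), ← integral_const_mul]
  refine setIntegral_congr_fun measurableSet_Ioi fun t ht => ?_
  have ht0 : (0 : ℝ) ≤ t := le_of_lt ht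
  have h1 : (t + (σ : ℝ)).toNNReal = σ + t.toNNReal := by
    rw [Real.toNNReal_add ht0 σ.coe_nonneg, Real.toNNReal_coe, add_comm]
  simp only [h1, shC_apply]
  rw [← mul_assoc, ← Real.exp_add]
  congr 2
  ring

lemma Jfun_eq {l : ℝ} (hl : 0 < l) (ψ : X →ᵇ ℝ) (σ : ℝ≥0) (w : IPath X) :
    Jfun l ψ σ w = gB hl ψ w - Real.exp (-l * σ) * gB hl ψ (shC σ w) := by
  rw [gB_apply, gB_apply, Gfun_decomp hl ψ σ w]; ring

lemma measurable_J {l : ℝ} (hl : 0 < l) (ψ : X →ᵇ ℝ) {τ : IPath X → ℝ≥0} (hτ : Measurable τ) :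
    Measurable (fun w => Jfun l ψ (τ w) w) := by
  simp_rw [Jfun_eq hl]
  have h1 : Measurable (fun w => gB hl ψ (shC (τ w) w)) :=
    (gB hl ψ).continuous.measurable.comp (measurable_shiftAt hτ)
  have h2 : Measurable (fun w => gB hl ψ w) := (gB hl ψ).continuous.measurable
  have h3 : Measurable (fun w => (τ w : ℝ)) := measurable_coe_nnreal_real.comp hτ
  fun_prop

lemma exp_neg_le_one {l : ℝ} (hl : 0 < l) (σ : ℝ≥0) : Real.exp (-l * σ) ≤ 1 := by
  rw [Real.exp_le_one_iff]
  have := mul_nonneg hl.le σ.coe_nonneg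
  linarith

lemma abs_J_le {l : ℝ} (hl : 0 < l) (ψ : X →ᵇ ℝ) (σ : ℝ≥0) (w : IPath X) :
    |Jfun l ψ σ w| ≤ 2 * ‖gB hl ψ‖ := by
  rw [Jfun_eq hl]
  have h1 := (gB hl ψ).norm_coe_le_norm w
  have h2 := (gB hl ψ).norm_coe_le_norm (shC σ w)
  rw [Real.norm_eq_abs] at h1 h2
  have h3 : |Real.exp (-l * σ) * gB hl ψ (shC σ w)| ≤ 1 * ‖gB hl ψ‖ := by
    rw [abs_mul, abs_of_pos (Real.exp_pos _)]
    gcongr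
    exact exp_neg_le_one hl σ
  have := abs_sub (gB hl ψ w) (Real.exp (-l * σ) * gB hl ψ (shC σ w))
  linarith

lemma integrable_J {l : ℝ} (hl : 0 < l) (ψ : X →ᵇ ℝ) {τ : IPath X → ℝ≥0} (hτ : Measurable τ)
    (P : Measure (IPath X)) [IsFiniteMeasure P] : Integrable (fun w => Jfun l ψ (τ w) w) P :=
  Integrable.of_bound (measurable_J hl ψ hτ).aestronglyMeasurable _
    (Eventually.of_forall fun w => abs_J_le hl ψ (τ w) w)

lemma Jfun_add_smul {l : ℝ} (hl : 0 < l) (ψ χ : X →ᵇ ℝ) (c : ℝ) (σ : ℝ≥0) (w : IPath X) :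
    Jfun l (fun x => ψ x + c * χ x) σ w = Jfun l ψ σ w + c * Jfun l χ σ w := by
  unfold Jfun
  rw [← integral_const_mul, ← integral_add]
  · refine integral_congr_ae (Eventually.of_forall fun t => ?_)
    simp only
    ring
  · exact (G_int hl ψ w 0).mono_set Ioc_subset_Ioi_self
  · exact ((G_int hl χ w 0).mono_set Ioc_subset_Ioi_self).const_mul c

end functionals

section laplace

variable [PolishSpace X] [MeasurableSpace X] [BorelSpace X]

lemma laplace_unique {lam : ℕ → ℝ} (hpos : ∀ n, 0 < lam n)
    (hd : Ioi (0 : ℝ) ⊆ closure (range lam)) {u v : ℝ → ℝ} (hu : Continuous u) (hv : Continuous v)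
    {M : ℝ} (hu0 : ∀ t, 0 ≤ u t) (hv0 : ∀ t, 0 ≤ v t) (huM : ∀ t, u t ≤ M) (hvM : ∀ t, v t ≤ M)
    (h : ∀ n, ∫ t in Ioi (0 : ℝ), Real.exp (-lam n * t) * u t =
      ∫ t in Ioi (0 : ℝ), Real.exp (-lam n * t) * v t) : ∀ t, 0 ≤ t → u t = v t := by
  have hcont : ∀ f : ℝ → ℝ, Continuous f → (∀ t, 0 ≤ f t) → (∀ t, f t ≤ M) →
      ContinuousOn (fun l => ∫ t in Ioi (0 : ℝ), Real.exp (-l * t) * f t) (Ioi 0) := by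
    intro f hf hf0 hfM l hl
    have hl : 0 < l := hl
    refine ContinuousAt.continuousWithinAt ?_
    refine continuousAt_of_dominated (bound := fun t => Real.exp (-(l / 2) * t) * M) ?_ ?_
      (G_dom_int (half_pos hl) 0 M) ?_
    · exact Eventually.of_forall fun l => (by fun_prop : Continuous fun t : ℝ =>
        Real.exp (-l * t) * f t).aestronglyMeasurable
    · filter_upwards [Ioi_mem_nhds (half_lt_self hl)] with l' hl'
      refine (ae_restrict_mem measurableSet_Ioi).mono fun t ht => ?_
      have ht : 0 < t := ht
      have hl' : l / 2 < l' := hl'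
      rw [Real.norm_of_nonneg (mul_nonneg (Real.exp_pos _).le (hf0 t))]
      refine mul_le_mul ?_ (hfM t) (hf0 t) (Real.exp_pos _).le
      rw [Real.exp_le_exp]
      nlinarith
    · refine Eventually.of_forall fun t => ?_
      fun_prop
  have hall : ∀ l, 0 < l → ∫ t in Ioi (0 : ℝ), Real.exp (-l * t) * u t =
      ∫ t in Ioi (0 : ℝ), Real.exp (-l * t) * v t := by
    have : EqOn (fun l => ∫ t in Ioi (0 : ℝ), Real.exp (-l * t) * u t)
        (fun l => ∫ t in Ioi (0 : ℝ), Real.exp (-l * t) * v t) (Ioi 0) := by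
      refine Set.EqOn.of_subset_closure (s := range lam) ?_ (hcont u hu hu0 huM)
        (hcont v hv hv0 hvM) ?_ hd
      · rintro _ ⟨n, rfl⟩; exact h n
      · rintro _ ⟨n, rfl⟩; exact hpos n
    exact fun l hl => this hl
  have hM : 0 ≤ M := (hu0 0).trans (huM 0)
  let ρ : (ℝ → ℝ) → Measure ℝ := fun f => (volume.restrict (Ioi (0 : ℝ))).withDensity
    (fun t => ENNReal.ofReal (Real.exp (-1 * t) * f t))
  have hlint : ∀ f : ℝ → ℝ, Continuous f → (∀ t, 0 ≤ f t) → (∀ t, f t ≤ M) →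
      ∫⁻ t in Ioi (0 : ℝ), ENNReal.ofReal (Real.exp (-1 * t) * f t) ≠ ⊤ := by
    intro f hf hf0 hfM
    have hi : IntegrableOn (fun t => Real.exp (-1 * t) * f t) (Ioi 0) := by
      refine Integrable.mono' (G_dom_int one_pos 0 M) (by fun_prop : Continuous fun t : ℝ =>
        Real.exp (-1 * t) * f t).aestronglyMeasurable (Eventually.of_forall fun t => ?_)
      rw [Real.norm_of_nonneg (mul_nonneg (Real.exp_pos _).le (hf0 t))]
      gcongr
      exact hfM t
    exact hi.lintegral_lt_top.ne
  have hfin : ∀ f : ℝ → ℝ, Continuous f → (∀ t, 0 ≤ f t) → (∀ t, f t ≤ M) →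
      IsFiniteMeasure (ρ f) := fun f hf hf0 hfM =>
    isFiniteMeasure_withDensity (hlint f hf hf0 hfM)
  have hfu := hfin u hu hu0 huM
  have hfv := hfin v hv hv0 hvM
  have hae : ∀ f, ∀ᵐ t ∂(ρ f), 0 < t := fun f =>
    (withDensity_absolutelyContinuous _ _).ae_le (ae_restrict_mem measurableSet_Ioi)
  let e1 : ℝ≥0 →ᵇ ℝ := BoundedContinuousFunction.ofNormedAddCommGroup
    (fun t => Real.exp (-(t : ℝ))) (by fun_prop) 1 (fun t => by
      rw [Real.norm_of_nonneg (Real.exp_pos _).le]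
      exact Real.exp_le_one_iff.2 (by simp))
  have hmeq : (ρ u).map Real.toNNReal = (ρ v).map Real.toNNReal := by
    refine ext_of_submonoid (Submonoid.powers e1) ?_ ?_
    · intro x y hxy
      refine ⟨e1, Submonoid.mem_powers _, fun h => hxy ?_⟩
      have : -(x : ℝ) = -(y : ℝ) := Real.exp_injective h
      exact NNReal.coe_injective (neg_injective this)
    · rintro _ ⟨n, rfl⟩
      have hcomp : ∀ f : ℝ → ℝ, Continuous f → (∀ t, 0 ≤ f t) →
          ∫ x, (e1 ^ n) x ∂((ρ f).map Real.toNNReal) =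
          ∫ t in Ioi (0 : ℝ), Real.exp (-(n + 1 : ℝ) * t) * f t := by
        intro f hf hf0
        rw [integral_map measurable_real_toNNReal.aemeasurable
          (e1 ^ n).continuous.aestronglyMeasurable]
        rw [integral_withDensity_eq_integral_toReal_smul (by fun_prop)
          (Eventually.of_forall fun _ => ENNReal.ofReal_lt_top)]
        refine setIntegral_congr_fun measurableSet_Ioi fun t ht => ?_
        have ht : 0 < t := ht
        simp only [smul_eq_mul]
        rw [ENNReal.toReal_ofReal (mul_nonneg (Real.exp_pos _).le (hf0 t))]
        have : (e1 ^ n) t.toNNReal = Real.exp (-t) ^ n := by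
          change (e1 t.toNNReal) ^ n = _
          change Real.exp (-(t.toNNReal : ℝ)) ^ n = _
          rw [Real.coe_toNNReal _ ht.le]
        rw [this, ← Real.exp_nat_mul]
        rw [mul_right_comm, ← Real.exp_add]
        congr 2
        ring
      have h1 := hcomp u hu hu0
      have h2 := hcomp v hv hv0
      have h3 := hall (n + 1) (by positivity)
      change ∫ x, (e1 ^ n) x ∂((ρ u).map Real.toNNReal) = ∫ x, (e1 ^ n) x ∂((ρ v).map Real.toNNReal)
      rw [h1, h2, h3]
  have hback : ∀ f, ((ρ f).map Real.toNNReal).map ((↑) : ℝ≥0 → ℝ) = ρ f := by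
    intro f
    rw [Measure.map_map measurable_coe_nnreal_real measurable_real_toNNReal]
    conv_rhs => rw [← Measure.map_id (μ := ρ f)]
    refine Measure.map_congr ?_
    filter_upwards [hae f] with t ht
    simp [ht.le]
  have hρ : ρ u = ρ v := by rw [← hback u, ← hback v, hmeq]
  have hae2 := (withDensity_eq_iff (μ := volume.restrict (Ioi (0 : ℝ)))
    (by fun_prop : AEMeasurable (fun t => ENNReal.ofReal (Real.exp (-1 * t) * u t)) _)
    (by fun_prop : AEMeasurable (fun t => ENNReal.ofReal (Real.exp (-1 * t) * v t)) _)
    (hlint u hu hu0 huM)).1 hρ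
  have hae3 : u =ᵐ[volume.restrict (Ioi (0 : ℝ))] v := by
    filter_upwards [hae2] with t ht
    have := (ENNReal.ofReal_eq_ofReal_iff (mul_nonneg (Real.exp_pos _).le (hu0 t))
      (mul_nonneg (Real.exp_pos _).le (hv0 t))).1 ht
    exact mul_left_cancel₀ (Real.exp_pos _).ne' this
  have hEq : EqOn u v (Ioi 0) :=
    Measure.eqOn_open_of_ae_eq hae3 isOpen_Ioi hu.continuousOn hv.continuousOn
  have := hEq.closure hu hv
  rw [closure_Ioi] at this
  exact fun t ht => this ht

lemma integral_gB {l : ℝ} (hl : 0 < l) (ψ : X →ᵇ ℝ) (P : ProbabilityMeasure (IPath X)) :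
    intBCF (gB hl ψ) P = ∫ t in Ioi (0 : ℝ), Real.exp (-l * t) *
      ∫ w, ψ (w t.toNNReal) ∂(P : Measure (IPath X)) := by
  unfold intBCF
  simp_rw [gB_apply, Gfun]
  rw [integral_integral_swap]
  · simp_rw [integral_const_mul]
  · have hm : Measurable (fun p : IPath X × ℝ => Real.exp (-l * p.2) * ψ (p.1 p.2.toNNReal)) := by
      have h1 : Measurable (fun p : IPath X × ℝ => p.1 p.2.toNNReal) :=
        measurable_ev_joint.comp ((measurable_real_toNNReal.comp measurable_snd).prodMk
          measurable_fst)
      have h2 := ψ.continuous.measurable.comp h1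
      have h3 : Measurable (fun p : IPath X × ℝ => Real.exp (-l * p.2)) := by fun_prop
      exact h3.mul h2
    refine Integrable.mono' (g := fun p => (1 : ℝ) * (Real.exp (-l * p.2) * ‖ψ‖)) ?_
      hm.aestronglyMeasurable (Eventually.of_forall fun p => ?_)
    · exact Integrable.mul_prod (integrable_const (1 : ℝ)) (G_dom_int hl 0 ‖ψ‖)
    · rw [one_mul]; exact G_bound l ψ p.1 p.2

lemma marginal_psi_eq {lam : ℕ → ℝ} (hpos : ∀ n, 0 < lam n)
    (hd : Ioi (0 : ℝ) ⊆ closure (range lam)) (ψ : X →ᵇ ℝ) (h0 : ∀ x, 0 ≤ ψ x)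
    (P Q : ProbabilityMeasure (IPath X))
    (h : ∀ n, intBCF (gB (hpos n) ψ) P = intBCF (gB (hpos n) ψ) Q) (t : ℝ≥0) :
    ∫ w, ψ (w t) ∂(P : Measure (IPath X)) = ∫ w, ψ (w t) ∂(Q : Measure (IPath X)) := by
  have hc : ∀ R : ProbabilityMeasure (IPath X),
      Continuous (fun t : ℝ => ∫ w, ψ (w t.toNNReal) ∂(R : Measure (IPath X))) := by
    intro R
    refine continuous_of_dominated (bound := fun _ => ‖ψ‖) ?_ ?_ (integrable_const _) ?_
    · exact fun t => (ψ.continuous.comp (continuous_ev _)).aestronglyMeasurable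
    · exact fun t => Eventually.of_forall fun w => ψ.norm_coe_le_norm _
    · refine Eventually.of_forall fun w => ?_
      have := ψ.continuous
      fun_prop
  have hM : ∀ R : ProbabilityMeasure (IPath X), ∀ t : ℝ,
      ∫ w, ψ (w t.toNNReal) ∂(R : Measure (IPath X)) ≤ ‖ψ‖ := by
    intro R t
    have := norm_integral_le_of_norm_le_const (μ := (R : Measure (IPath X)))
      (f := fun w => ψ (w t.toNNReal)) (Eventually.of_forall fun w => ψ.norm_coe_le_norm _)
    simp only [probReal_univ, mul_one] at this
    exact (le_abs_self _).trans this
  have := laplace_unique hpos hd (hc P) (hc Q) (fun t => integral_nonneg fun w => h0 _)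
    (fun t => integral_nonneg fun w => h0 _) (hM P) (hM Q) (fun n => by
      rw [← integral_gB (hpos n) ψ P, ← integral_gB (hpos n) ψ Q, h n]) t t.coe_nonneg
  simpa using this

end laplace

section kdata

variable [PolishSpace X] [MeasurableSpace X] [BorelSpace X]

/-- the data extracted from a strong Krylov map -/
structure KData (C : X → Set (ProbabilityMeasure (IPath X))) (l : ℕ → ℝ) (ψ : ℕ → X →ᵇ ℝ) :
    Prop where
  nice : NiceMap C
  start : ∀ x, ∀ P ∈ C x, ∀ᵐ w ∂(P : Measure (IPath X)), w 0 = x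
  lpos : ∀ n, 0 < l n
  nonneg : ∀ n x, 0 ≤ ψ n x
  det : ∀ P Q : ProbabilityMeasure (IPath X),
    (∀ n, intBCF (gB (lpos n) (ψ n)) P = intBCF (gB (lpos n) (ψ n)) Q) →
    ∀ t : ℝ≥0, ∀ f : X →ᵇ ℝ, ∫ w, f (w t) ∂(P : Measure (IPath X)) =
      ∫ w, f (w t) ∂(Q : Measure (IPath X))
  shiftK : ∀ x, ∀ P ∈ C x, ∀ τ : IPath X → ℝ≥0, IsStopT τ → (∀ w, 0 < τ w) →
    ∀ R, IsShiftAtOf τ P R → R ∈ KsetT C P τ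
  reach : ∀ x, ∀ P ∈ C x, ∀ τ : IPath X → ℝ≥0, IsStopT τ → (∀ w, 0 < τ w) →
    ∀ R ∈ KsetT C P τ, ∃ Q ∈ C x, IsShiftAtOf τ Q R ∧
      ∀ n, ∫ w, Jfun (l n) (ψ n) (τ w) w ∂(P : Measure (IPath X)) ≤
        ∫ w, Jfun (l n) (ψ n) (τ w) w ∂(Q : Measure (IPath X))

lemma exists_KData {lam : ℕ → ℝ} {phi : ℕ → X → ℝ} (hdata : GoodData lam phi)
    {C : X → Set (ProbabilityMeasure (IPath X))} (hK : IsStrongKrylov C lam phi) :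
    ∃ (l : ℕ → ℝ) (ψ : ℕ → X →ᵇ ℝ), KData C l ψ := by
  obtain ⟨hpos, hdense, hcont, hbdd, hsep, hmul, hpair⟩ := hdata
  obtain ⟨hval, hmeas, hstart, hshift, hgam⟩ := hK
  choose M hM using hbdd
  let φ : ℕ → X →ᵇ ℝ := fun n => BoundedContinuousFunction.ofNormedAddCommGroup (phi n) (hcont n)
    (M n) (hM n)
  have hφ : ∀ n x, φ n x = phi n x := fun n x => rfl
  let ε : ℕ → ℝ := fun j => 1 / (1 + |M j|)
  have hε : ∀ j, 0 < ε j := fun j => by positivity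
  have hεM : ∀ j x, |ε j * phi j x| ≤ 1 := by
    intro j x
    rw [abs_mul, abs_of_pos (hε j)]
    change 1 / (1 + |M j|) * _ ≤ 1
    rw [one_div_mul_eq_div, div_le_one (by positivity)]
    have := hM j x
    have := le_abs_self (M j)
    linarith
  choose mu hmu using hmul
  have hmu' : ∀ m n x, phi (mu m n) x = phi m x * phi n x := fun m n x => congrFun (hmu m n) x
  choose pr hpr1 hpr2 using hpair
  obtain ⟨e, hesurj⟩ := exists_surjective_nat (ℕ × ℕ × ℕ × Bool)
  let c : ℕ → ℕ → Bool → ℝ := fun m j b => if b then ε j else 0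
  have hc0 : ∀ m j b, 0 ≤ c m j b := by
    intro m j b
    by_cases hb : b = true
    · simp [c, hb, (hε j).le]
    · simp [c, hb]
  let l : ℕ → ℝ := fun n => lam (e n).1
  let ps : ℕ → ℕ → Bool → X →ᵇ ℝ := fun m j b => φ (mu m m) + (c m j b) • φ (mu (mu m m) j)
  let ψ : ℕ → X →ᵇ ℝ := fun n => ps (e n).2.1 (e n).2.2.1 (e n).2.2.2
  have hps : ∀ m j b x, ps m j b x = phi (mu m m) x + c m j b * phi (mu (mu m m) j) x :=
    fun m j b x => rfl
  have hlpos : ∀ n, 0 < l n := fun n => hpos _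
  have hps0 : ∀ m j b x, 0 ≤ ps m j b x := by
    intro m j b x
    rw [hps]
    simp only [hmu']
    have h1 := abs_le.1 (hεM j x)
    have hsq := mul_self_nonneg (phi m x)
    by_cases hb : b = true
    · simp only [c, hb, if_true]
      nlinarith
    · simp only [c, hb]
      simpa using hsq
  refine ⟨l, ψ, ⟨⟨fun x => (hval x).1, fun x => (hval x).2.1, hmeas⟩, ?_, hlpos,
    fun n x => hps0 _ _ _ x, ?_, ?_, ?_⟩⟩
  · intro x P hP
    have hms : MeasurableSet {w : IPath X | w 0 = x} := measurable_ev 0 (measurableSet_singleton x)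
    have := hstart x P hP
    rw [← prob_compl_eq_zero_iff hms] at this
    exact this
  · intro P Q h t
    have h1 : ∀ m j b, ∫ w, ps m j b (w t) ∂(P : Measure (IPath X)) =
        ∫ w, ps m j b (w t) ∂(Q : Measure (IPath X)) := by
      intro m j b
      refine marginal_psi_eq hpos hdense (ps m j b) (hps0 m j b) P Q (fun k => ?_) t
      obtain ⟨i, he⟩ := hesurj (k, m, j, b)
      have := h i
      have hG : ∀ n, e n = (k, m, j, b) → gB (hlpos n) (ψ n) = gB (hpos k) (ps m j b) := by
        intro n hn
        ext w
        simp only [gB_apply, l, ψ, hn]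
      rwa [hG _ he] at this
    have hint : ∀ (R : ProbabilityMeasure (IPath X)) (f : X →ᵇ ℝ),
        Integrable (fun w : IPath X => f (w t)) (R : Measure (IPath X)) := fun R f =>
      Integrable.of_bound (f.continuous.comp (continuous_ev t)).aestronglyMeasurable ‖f‖
        (Eventually.of_forall fun w => f.norm_coe_le_norm _)
    have h2 : ∀ m j, ∫ w, φ (mu (mu m m) j) (w t) ∂(P : Measure (IPath X)) =
        ∫ w, φ (mu (mu m m) j) (w t) ∂(Q : Measure (IPath X)) := by
      intro m j
      have ha := h1 m j false
      have hb := h1 m j true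
      have hps1 : ∀ x, ps m j false x = φ (mu m m) x := fun x => by simp [hps, c, hφ]
      have hps2 : ∀ x, ps m j true x = φ (mu m m) x + ε j * φ (mu (mu m m) j) x :=
        fun x => by simp [hps, c, hφ]
      simp_rw [hps1] at ha
      simp_rw [hps2] at hb
      rw [integral_add (hint _ _) ((hint _ _).const_mul _),
        integral_add (hint _ _) ((hint _ _).const_mul _), integral_const_mul, integral_const_mul,
        ha] at hb
      exact mul_left_cancel₀ (hε j).ne' (add_left_cancel hb)
    have hmeq : (P : Measure (IPath X)).map (fun w => w t) =
        (Q : Measure (IPath X)).map (fun w => w t) := by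
      let S : Submonoid (X →ᵇ ℝ) :=
        { carrier := {f | f = 1 ∨ ∃ m j, f = φ (mu (mu m m) j)}
          one_mem' := Or.inl rfl
          mul_mem' := by
            rintro f g (rfl | ⟨m, j, rfl⟩) (rfl | ⟨m', j', rfl⟩)
            · exact Or.inl (mul_one _)
            · exact Or.inr ⟨m', j', one_mul _⟩
            · exact Or.inr ⟨m, j, mul_one _⟩
            · refine Or.inr ⟨mu m m', mu j j', ?_⟩
              ext x
              simp only [BoundedContinuousFunction.coe_mul, Pi.mul_apply, hφ, hmu']
              ring }
      have hfm : ∀ R : ProbabilityMeasure (IPath X),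
          IsProbabilityMeasure ((R : Measure (IPath X)).map (fun w => w t)) := fun R =>
        Measure.isProbabilityMeasure_map (measurable_ev t).aemeasurable
      have := hfm P
      have := hfm Q
      refine ext_of_submonoid S ?_ ?_
      · intro x y hxy
        obtain ⟨n, δ, hδ, hy⟩ := hsep x {y}ᶜ (isOpen_compl_singleton.mem_nhds hxy)
        have hne := hy y (by simp)
        refine ⟨φ (mu (mu n n) n), Or.inr ⟨n, n, rfl⟩, ?_⟩
        simp only [hφ, hmu']
        intro heq
        have hne' : phi n x ≠ phi n y := by
          intro h
          rw [h, sub_self, abs_zero] at hne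
          linarith
        apply hne'
        have h3 : phi n x ^ 3 = phi n y ^ 3 := by rw [pow_three', pow_three', heq]
        exact (Odd.strictMono_pow (by decide : Odd 3)).injective h3
      · rintro f (rfl | ⟨m, j, rfl⟩)
        · simp
        · rw [integral_map (measurable_ev t).aemeasurable
            (BoundedContinuousFunction.continuous _).aestronglyMeasurable,
            integral_map (measurable_ev t).aemeasurable
            (BoundedContinuousFunction.continuous _).aestronglyMeasurable]
          exact h2 m j
    intro f
    rw [← integral_map (measurable_ev t).aemeasurable f.continuous.aestronglyMeasurable, hmeq,
      integral_map (measurable_ev t).aemeasurable f.continuous.aestronglyMeasurable]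
  · intro x P hP τ hτ hτ0 R hR
    obtain ⟨R', hR', hRK⟩ := hshift x P hP τ hτ hτ0
    have : R = R' := Subtype.ext (hR.trans hR'.symm)
    rwa [this]
  · intro x P hP τ hτ hτ0 R hR
    obtain ⟨Q, ⟨hQC, -, hQz⟩, hQR⟩ := (hgam x P hP τ hτ hτ0 R).1 hR
    refine ⟨Q, hQC, hQR, fun n => ?_⟩
    have hz : ∀ k m, ∫ w, Jfun (lam k) (φ m) (τ w) w ∂(P : Measure (IPath X)) ≤
        ∫ w, Jfun (lam k) (φ m) (τ w) w ∂(Q : Measure (IPath X)) := by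
      intro k m
      have := hQz (pr k m)
      rw [hpr1, hpr2] at this
      exact this
    have hexp : ∀ R : ProbabilityMeasure (IPath X),
        ∫ w, Jfun (l n) (ψ n) (τ w) w ∂(R : Measure (IPath X)) =
        ∫ w, Jfun (l n) (φ (mu (e n).2.1 (e n).2.1)) (τ w) w ∂(R : Measure (IPath X)) +
        c (e n).2.1 (e n).2.2.1 (e n).2.2.2 *
        ∫ w, Jfun (l n) (φ (mu (mu (e n).2.1 (e n).2.1) (e n).2.2.1)) (τ w) w
          ∂(R : Measure (IPath X)) := by
      intro R
      rw [← integral_const_mul, ← integral_add (integrable_J (hlpos n) _ hτ.measurable _)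
        ((integrable_J (hlpos n) _ hτ.measurable _).const_mul _)]
      refine integral_congr_ae (Eventually.of_forall fun w => ?_)
      exact Jfun_add_smul (hlpos n) _ _ _ (τ w) w
    rw [hexp P, hexp Q]
    exact add_le_add (hz _ _) (mul_le_mul_of_nonneg_left (hz _ _) (hc0 (e n).2.1 _ _))

end kdata

section stage12

variable [PolishSpace X] [MeasurableSpace X] [BorelSpace X]

/-- push-forward by the shift -/
def shP {τ : IPath X → ℝ≥0} (hτ : Measurable τ) (P : ProbabilityMeasure (IPath X)) :
    ProbabilityMeasure (IPath X) := P.map (measurable_shiftAt hτ).aemeasurable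

lemma isShift_shP {τ : IPath X → ℝ≥0} (hτ : Measurable τ) (P : ProbabilityMeasure (IPath X)) :
    IsShiftAtOf τ P (shP hτ P) := rfl

lemma intBCF_of_isShift {τ : IPath X → ℝ≥0} (hτ : Measurable τ) {P R : ProbabilityMeasure (IPath X)}
    (h : IsShiftAtOf τ P R) (f : (IPath X) →ᵇ ℝ) :
    intBCF f R = ∫ w, f (shiftAt τ w) ∂(P : Measure (IPath X)) := by
  unfold intBCF
  rw [h, integral_map (measurable_shiftAt hτ).aemeasurable f.continuous.aestronglyMeasurable]

variable {C : X → Set (ProbabilityMeasure (IPath X))} {l : ℕ → ℝ} {ψ : ℕ → X →ᵇ ℝ}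

/-- the functionals -/
def KData.G (hD : KData C l ψ) (n : ℕ) : (IPath X) →ᵇ ℝ := gB (hD.lpos n) (ψ n)

lemma KData.G_nonneg (hD : KData C l ψ) (n : ℕ) (w : IPath X) : 0 ≤ hD.G n w :=
  Gfun_nonneg _ _ (hD.nonneg n) w

lemma integrable_bcf_comp {α : Type*} [MeasurableSpace α] (P : Measure α) [IsFiniteMeasure P]
    (f : (IPath X) →ᵇ ℝ) {g : α → IPath X} (hg : Measurable g) : Integrable (fun w => f (g w)) P :=
  Integrable.of_bound (f.continuous.measurable.comp hg).aestronglyMeasurable ‖f‖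
    (Eventually.of_forall fun _ => f.norm_coe_le_norm _)

lemma KData.decomp_const (hD : KData C l ψ) (n : ℕ) (t : ℝ≥0) {P R : ProbabilityMeasure (IPath X)}
    (h : IsShiftAtOf (fun _ => t) P R) :
    intBCF (hD.G n) P = ∫ w, Jfun (l n) (ψ n) t w ∂(P : Measure (IPath X)) +
      Real.exp (-l n * t) * intBCF (hD.G n) R := by
  rw [intBCF_of_isShift measurable_const h, ← integral_const_mul, ← integral_add]
  · refine integral_congr_ae (Eventually.of_forall fun w => ?_)
    exact Gfun_decomp (hD.lpos n) (ψ n) t w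
  · exact integrable_J (hD.lpos n) (ψ n) (τ := fun _ => t) measurable_const _
  · exact (integrable_bcf_comp _ _ (measurable_shiftAt measurable_const)).const_mul _

lemma KData.stage1 (hD : KData C l ψ) {x : X} {P : ProbabilityMeasure (IPath X)}
    (hP : P ∈ lexInf C hD.G x) {t : ℝ≥0} (ht : 0 < t) {R : ProbabilityMeasure (IPath X)}
    (hR : IsShiftAtOf (fun _ => t) P R) : R ∈ KsetT (lexInf C hD.G) P (fun _ => t) := by
  have hτm : Measurable (fun _ : IPath X => t) := measurable_const
  obtain ⟨s, hsC, hs⟩ := (hD.nice.lexInf hD.G).exists_selection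
  have hsm := measurable_toMeasure hs
  obtain ⟨S, hS⟩ := exists_mix hsm (P : Measure (IPath X)) (measurable_piAt hτm)
  have hSK : S ∈ KsetT C P (fun _ => t) :=
    mix_mem_K hD.nice (fun y => mem_iInter.1 (hsC y) 0) hsm P hτm hS
  have hPC : P ∈ C x := mem_iInter.1 hP 0
  obtain ⟨Q, hQC, hQS, hQz⟩ := hD.reach x P hPC _ (isStopT_const t) (fun _ => ht) S hSK
  have key : ∀ n, Q ∈ lexC C hD.G n x ∧ R ∈ KsetT (lexC C hD.G n) P (fun _ => t) := by
    intro n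
    induction n with
    | zero => exact ⟨hQC, hD.shiftK x P hPC _ (isStopT_const t) (fun _ => ht) R hR⟩
    | succ n ih =>
      obtain ⟨hQn, hRn⟩ := ih
      have h1 := hRn (hD.G n)
      have h2 : ∫ w, hSupp (lexC C hD.G n) (piAt (fun _ => t) w) (hD.G n)
          ∂(P : Measure (IPath X)) = intBCF (hD.G n) S := by
        rw [hS]
        refine integral_congr_ae (Eventually.of_forall fun w => ?_)
        exact (lexInf_eq_hSupp (hsC _) n).symm
      have h3 := hD.decomp_const n t hR
      have h4 := hD.decomp_const n t hQS
      have h5 := le_hSupp hQn (hD.G n)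
      have h6 := lexInf_eq_hSupp hP n
      have h7 := hQz n
      have hepos := Real.exp_pos (-l n * t)
      have h8 : Real.exp (-l n * t) * intBCF (hD.G n) S ≤
          Real.exp (-l n * t) * intBCF (hD.G n) R := by linarith
      have h9 := le_of_mul_le_mul_left h8 hepos
      have h10 : Real.exp (-l n * t) * intBCF (hD.G n) R ≤
          Real.exp (-l n * t) * intBCF (hD.G n) S :=
        mul_le_mul_of_nonneg_left (h1.trans h2.le) hepos.le
      refine ⟨⟨hQn, le_antisymm h5 (by linarith)⟩, ?_⟩
      exact K_face (hD.nice.lexC hD.G n) hτm hRn (hD.G n) (h2.le.trans h9)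
  exact K_iInter (fun n => hD.nice.lexC hD.G n) (lexC_succ_subset C hD.G) hτm fun n => (key n).2

lemma continuous_shC (r : ℝ≥0) : Continuous (shC r : IPath X → IPath X) :=
  ContinuousMap.continuous_precomp _

/-- `w ↦ g (w r) * f (θ_r w)` -/
def stepF (g : X →ᵇ ℝ) (r : ℝ≥0) (f : (IPath X) →ᵇ ℝ) : (IPath X) →ᵇ ℝ :=
  g.compContinuous ⟨fun w => w r, continuous_ev r⟩ * f.compContinuous ⟨shC r, continuous_shC r⟩

lemma stepF_apply (g : X →ᵇ ℝ) (r : ℝ≥0) (f : (IPath X) →ᵇ ℝ) (w : IPath X) :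
    stepF g r f w = g (w r) * f (shC r w) := rfl

lemma shC_shC (r s : ℝ≥0) (w : IPath X) : shC s (shC r w) = shC (r + s) w := by
  ext t
  simp only [shC_apply, add_assoc]

lemma shC_zero (w : IPath X) : shC 0 w = w := by
  ext t; simp [shC_apply]

inductive MF : ((IPath X) →ᵇ ℝ) → Prop
  | one : MF 1
  | step (g : X →ᵇ ℝ) (r : ℝ≥0) (f : (IPath X) →ᵇ ℝ) : MF f → MF (stepF g r f)

lemma stepF_mul_le (g g' : X →ᵇ ℝ) {r r' : ℝ≥0} (h : r ≤ r') (f f' : (IPath X) →ᵇ ℝ) :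
    stepF g r f * stepF g' r' f' = stepF g r (f * stepF g' (r' - r) f') := by
  ext w
  simp only [BoundedContinuousFunction.coe_mul, Pi.mul_apply, stepF_apply, shC_shC, shC_apply,
    add_tsub_cancel_of_le h]
  ring

lemma MF.mul {f f' : (IPath X) →ᵇ ℝ} (hf : MF f) (hf' : MF f') : MF (f * f') := by
  induction hf' generalizing f with
  | one => rwa [mul_one]
  | step g' r' f0' hf0' ih =>
    induction hf generalizing r' with
    | one => rw [one_mul]; exact MF.step _ _ _ hf0'
    | step g r f0 hf0 ih2 =>
      rcases le_total r r' with h | h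
      · rw [stepF_mul_le _ _ h]
        exact MF.step _ _ _ (ih2 _)
      · rw [mul_comm, stepF_mul_le _ _ h, mul_comm f0']
        exact MF.step _ _ _ (ih (MF.step _ _ _ hf0))

lemma eq_of_MF {P Q : Measure (IPath X)} [IsFiniteMeasure P] [IsFiniteMeasure Q]
    (h : ∀ f, MF f → ∫ w, f w ∂P = ∫ w, f w ∂Q) : P = Q := by
  let S : Submonoid ((IPath X) →ᵇ ℝ) :=
    { carrier := {f | MF f}
      one_mem' := MF.one
      mul_mem' := fun hf hg => MF.mul hf hg }
  refine ext_of_submonoid S ?_ (fun f hf => h f hf)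
  intro v w hvw
  have : ∃ t, v t ≠ w t := by
    by_contra hcon
    push Not at hcon
    exact hvw (ContinuousMap.ext hcon)
  obtain ⟨t, ht⟩ := this
  let := TopologicalSpace.upgradeIsCompletelyMetrizable X
  let g : X →ᵇ ℝ := BoundedContinuousFunction.ofNormedAddCommGroup
    (fun x => min 1 (dist x (v t))) (by fun_prop) 1 (fun x => by
      rw [Real.norm_eq_abs, abs_of_nonneg (le_min zero_le_one dist_nonneg)]
      exact min_le_left _ _)
  refine ⟨stepF g t 1, MF.step _ _ _ MF.one, ?_⟩
  have h1 : stepF g t 1 v = 0 := by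
    simp [stepF_apply, g]
  have h2 : 0 < stepF g t 1 w := by
    have : 0 < g (w t) := lt_min one_pos (dist_pos.2 ht.symm)
    simpa [stepF_apply] using this
  rw [h1]; exact h2.ne

lemma KData.det_map (hD : KData C l ψ) {P Q : ProbabilityMeasure (IPath X)}
    (h : ∀ n, intBCF (hD.G n) P = intBCF (hD.G n) Q) (t : ℝ≥0) :
    (P : Measure (IPath X)).map (fun w => w t) = (Q : Measure (IPath X)).map (fun w => w t) := by
  have hfm : ∀ R : ProbabilityMeasure (IPath X),
      IsProbabilityMeasure ((R : Measure (IPath X)).map (fun w => w t)) := fun R =>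
    Measure.isProbabilityMeasure_map (measurable_ev t).aemeasurable
  have := hfm P
  have := hfm Q
  refine ext_of_forall_integral_eq_of_IsFiniteMeasure fun f => ?_
  rw [integral_map (measurable_ev t).aemeasurable f.continuous.aestronglyMeasurable,
    integral_map (measurable_ev t).aemeasurable f.continuous.aestronglyMeasurable]
  exact hD.det P Q h t f

lemma intBCF_neg (f : (IPath X) →ᵇ ℝ) (P : ProbabilityMeasure (IPath X)) :
    intBCF (-f) P = - intBCF f P := integral_neg _

/-- if all elements of `C_∞(y)` give the same value to `f`, the Markov identity holds. -/
lemma KData.markov_of_V (hD : KData C l ψ) {s : X → ProbabilityMeasure (IPath X)}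
    (hsC : ∀ x, s x ∈ lexInf C hD.G x) {f : (IPath X) →ᵇ ℝ}
    (hV : ∀ y, ∀ P ∈ lexInf C hD.G y, intBCF f P = intBCF f (s y)) {x : X}
    {P : ProbabilityMeasure (IPath X)} (hP : P ∈ lexInf C hD.G x) {t : ℝ≥0} (ht : 0 < t) :
    ∫ w, f (shC t w) ∂(P : Measure (IPath X)) = ∫ w, intBCF f (s (w t)) ∂(P : Measure (IPath X)) := by
  have hN := hD.nice.lexInf hD.G
  have hτm : Measurable (fun _ : IPath X => t) := measurable_const
  have hR := hD.stage1 hP ht (isShift_shP hτm P)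
  have h1 := hR f
  have h2 := hR (-f)
  rw [intBCF_neg] at h2
  have hh1 : ∀ y, hSupp (lexInf C hD.G) y f = intBCF f (s y) := by
    intro y
    obtain ⟨Q, hQ, h⟩ := hN.exists_max y f
    rw [← h, hV y Q hQ]
  have hh2 : ∀ y, hSupp (lexInf C hD.G) y (-f) = -intBCF f (s y) := by
    intro y
    obtain ⟨Q, hQ, h⟩ := hN.exists_max y (-f)
    rw [← h, intBCF_neg, hV y Q hQ]
  simp_rw [hh1] at h1
  simp_rw [hh2] at h2
  rw [integral_neg] at h2
  have h3 := intBCF_of_isShift hτm (isShift_shP hτm P) f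
  rw [h3] at h1 h2
  exact le_antisymm h1 (neg_le_neg_iff.1 h2)

lemma KData.V_all (hD : KData C l ψ) {s : X → ProbabilityMeasure (IPath X)}
    (hsC : ∀ x, s x ∈ lexInf C hD.G x)
    (hsm : Measurable (fun x => (s x : Measure (IPath X)))) {f : (IPath X) →ᵇ ℝ} (hf : MF f) :
    ∀ y, ∀ P ∈ lexInf C hD.G y, intBCF f P = intBCF f (s y) := by
  induction hf with
  | one => intro y P hP; simp [intBCF]
  | step g r f hf ih =>
    have hst : ∀ y, ∀ P ∈ lexInf C hD.G y,
        intBCF (stepF g 0 f) P = g y * intBCF f (s y) := by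
      intro y P hP
      rw [← ih y P hP]
      unfold intBCF
      rw [← integral_const_mul]
      refine integral_congr_ae ?_
      filter_upwards [hD.start y P (mem_iInter.1 hP 0)] with w hw
      rw [stepF_apply, shC_zero, hw]
    rcases eq_or_lt_of_le (zero_le (a := r)) with hr | hr
    · intro y P hP
      rw [← hr, hst y P hP, hst y _ (hsC y)]
    · intro y P hP
      have hV : ∀ y, ∀ P ∈ lexInf C hD.G y,
          intBCF (stepF g 0 f) P = intBCF (stepF g 0 f) (s y) := by
        intro y P hP
        rw [hst y P hP, hst y _ (hsC y)]
      have hval : ∀ P : ProbabilityMeasure (IPath X), intBCF (stepF g r f) P =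
          ∫ w, stepF g 0 f (shC r w) ∂(P : Measure (IPath X)) := by
        intro P
        refine integral_congr_ae (Eventually.of_forall fun w => ?_)
        simp only [stepF_apply, shC_zero, shC_apply, add_zero]
      rw [hval, hval, hD.markov_of_V hsC hV hP hr, hD.markov_of_V hsC hV (hsC y) hr]
      have hm := measurable_intBCF_sel hsm (stepF g 0 f)
      rw [← integral_map (f := fun y => intBCF (stepF g 0 f) (s y))
        (measurable_ev r).aemeasurable hm.aestronglyMeasurable,
        ← integral_map (f := fun y => intBCF (stepF g 0 f) (s y))
        (measurable_ev r).aemeasurable hm.aestronglyMeasurable]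
      rw [hD.det_map (fun n => (lexInf_eq_hSupp hP n).trans (lexInf_eq_hSupp (hsC y) n).symm) r]

/-- The data of the Markov selection -/
structure MSel (hD : KData C l ψ) (s : X → ProbabilityMeasure (IPath X)) : Prop where
  mem : ∀ x, s x ∈ lexInf C hD.G x
  uniq : ∀ x, ∀ P ∈ lexInf C hD.G x, P = s x
  meas : Measurable (fun x => (s x : Measure (IPath X)))
  markov : ∀ x t, ∀ f : (IPath X) →ᵇ ℝ, ∫ w, f (shC t w) ∂(s x : Measure (IPath X)) =
    ∫ w, intBCF f (s (w t)) ∂(s x : Measure (IPath X))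

lemma KData.exists_MSel (hD : KData C l ψ) : ∃ s, MSel hD s ∧
    (∀ U, IsOpen U → MeasurableSet (s ⁻¹' U)) := by
  obtain ⟨s, hsC, hs⟩ := (hD.nice.lexInf hD.G).exists_selection
  have hsm := measurable_toMeasure hs
  have huniq : ∀ x, ∀ P ∈ lexInf C hD.G x, P = s x := by
    intro x P hP
    have : (P : Measure (IPath X)) = s x := eq_of_MF fun f hf => hD.V_all hsC hsm hf x P hP
    exact Subtype.ext this
  refine ⟨s, ⟨hsC, huniq, hsm, ?_⟩, hs⟩
  intro x t f
  rcases eq_or_lt_of_le (zero_le (a := t)) with ht | ht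
  · subst ht
    have h1 : ∀ᵐ w ∂(s x : Measure (IPath X)), intBCF f (s (w 0)) = intBCF f (s x) := by
      filter_upwards [hD.start x (s x) (mem_iInter.1 (hsC x) 0)] with w hw
      rw [hw]
    rw [integral_congr_ae h1]
    simp only [shC_zero, integral_const, probReal_univ, one_smul]
    rfl
  · exact hD.markov_of_V hsC (fun y P hP => by rw [huniq y P hP]) (hsC x) ht

end stage12

section glue

variable [PolishSpace X] [MeasurableSpace X] [BorelSpace X]

open scoped Classical in
/-- gluing of paths at time `t` -/
def glue (t : ℝ≥0) (ω v : IPath X) : IPath X :=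
  if h : v 0 = ω t then
    ⟨fun s => if s ≤ t then ω s else v (s - t), by
      refine Continuous.if_le ω.continuous (v.continuous.comp (by fun_prop)) continuous_id
        continuous_const ?_
      intro s hs
      subst hs
      simp [h]⟩
  else ω

lemma glue_le {t s : ℝ≥0} (ω v : IPath X) (h : s ≤ t) : glue t ω v s = ω s := by
  unfold glue
  split_ifs with h1
  · simp [h]
  · rfl

lemma glue_gt {t s : ℝ≥0} {ω v : IPath X} (hv : v 0 = ω t) (h : t < s) :
    glue t ω v s = v (s - t) := by
  unfold glue
  rw [dif_pos hv]
  simp [not_le.2 h]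

lemma glue_add {t : ℝ≥0} {ω v : IPath X} (hv : v 0 = ω t) (s : ℝ≥0) :
    glue t ω v (t + s) = v s := by
  rcases eq_or_lt_of_le (zero_le (a := s)) with h | h
  · rw [← h, add_zero, glue_le _ _ le_rfl, hv]
  · rw [glue_gt hv (lt_add_of_pos_right t h), add_tsub_cancel_left]

lemma glue_junk {t : ℝ≥0} {ω v : IPath X} (hv : v 0 ≠ ω t) : glue t ω v = ω := by
  unfold glue
  rw [dif_neg hv]

lemma shC_glue {t : ℝ≥0} {ω v : IPath X} (hv : v 0 = ω t) : shC t (glue t ω v) = v := by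
  ext s
  rw [shC_apply, glue_add hv]

lemma shC_glue_le {r t : ℝ≥0} (h : r ≤ t) (ω v : IPath X) :
    shC r (glue t ω v) = glue (t - r) (shC r ω) v := by
  by_cases hv : v 0 = ω t
  · have hv' : v 0 = shC r ω (t - r) := by rw [shC_apply, add_tsub_cancel_of_le h, hv]
    ext s
    rw [shC_apply]
    rcases le_or_gt s (t - r) with hs | hs
    · rw [glue_le _ _ hs, glue_le, shC_apply]
      calc r + s ≤ r + (t - r) := by gcongr
        _ = t := add_tsub_cancel_of_le h
    · have : t < r + s := by
        calc t = r + (t - r) := (add_tsub_cancel_of_le h).symm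
          _ < r + s := by gcongr
      rw [glue_gt hv' hs, glue_gt hv this]
      congr 1
      have h1 : (t : ℝ) < r + s := by exact_mod_cast this
      apply NNReal.coe_injective
      rw [NNReal.coe_sub hs.le, NNReal.coe_sub this.le, NNReal.coe_sub h]
      push_cast
      ring
  · have hv' : v 0 ≠ shC r ω (t - r) := by rwa [shC_apply, add_tsub_cancel_of_le h]
    rw [glue_junk hv, glue_junk hv']

lemma measurable_glue_gen {α : Type*} {mα : MeasurableSpace α} (t s : ℝ≥0) {a b : α → IPath X}
    (ha : Measurable (fun p => a p s)) (ha' : Measurable (fun p => a p t))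
    (hb : Measurable (fun p => b p 0)) (hb' : t < s → Measurable (fun p => b p (s - t))) :
    Measurable (fun p => glue t (a p) (b p) s) := by
  classical
  rcases le_or_gt s t with hs | hs
  · simpa only [glue_le _ _ hs] using ha
  · have : (fun p => glue t (a p) (b p) s) =
        fun p => if b p 0 = a p t then b p (s - t) else a p s := by
      ext p
      split_ifs with h
      · rw [glue_gt h hs]
      · rw [glue_junk h]
    rw [this]
    exact Measurable.ite (measurableSet_eq_fun hb ha') (hb' hs) ha

lemma measurable_glue (t : ℝ≥0) :
    Measurable (fun p : IPath X × IPath X => glue t p.1 p.2) := by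
  refine measurable_to_path fun s => ?_
  exact measurable_glue_gen t s ((measurable_ev s).comp measurable_fst)
    ((measurable_ev t).comp measurable_fst) ((measurable_ev 0).comp measurable_snd)
    (fun _ => (measurable_ev _).comp measurable_snd)

end glue

section markov

variable [PolishSpace X] [MeasurableSpace X] [BorelSpace X]
variable {C : X → Set (ProbabilityMeasure (IPath X))} {l : ℕ → ℝ} {ψ : ℕ → X →ᵇ ℝ}
variable {hD : KData C l ψ} {s : X → ProbabilityMeasure (IPath X)}

lemma MSel.start (hs : MSel hD s) (x : X) : ∀ᵐ w ∂(s x : Measure (IPath X)), w 0 = x :=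
  hD.start x (s x) (mem_iInter.1 (hs.mem x) 0)

lemma MSel.memC (hs : MSel hD s) (x : X) : s x ∈ C x := mem_iInter.1 (hs.mem x) 0

/-- the transition kernel seen from a random point -/
def MSel.kerAt (hs : MSel hD s) {g : IPath X → X} (hg : Measurable g) :
    Kernel (IPath X) (IPath X) := (selKer s hs.meas).comap g hg

instance (hs : MSel hD s) {g : IPath X → X} (hg : Measurable g) :
    IsMarkovKernel (hs.kerAt hg) := by unfold MSel.kerAt; infer_instance

lemma MSel.kerAt_apply (hs : MSel hD s) {g : IPath X → X} (hg : Measurable g) (w : IPath X) :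
    hs.kerAt hg w = (s (g w) : Measure (IPath X)) := rfl

/-- measure version of an averaged identity -/
lemma MSel.measure_eq (hs : MSel hD s) {g : IPath X → X} (hg : Measurable g)
    {θ : IPath X → IPath X} (hθ : Measurable θ) (P : ProbabilityMeasure (IPath X))
    (h : ∀ f : (IPath X) →ᵇ ℝ, ∫ w, f (θ w) ∂(P : Measure (IPath X)) =
      ∫ w, intBCF f (s (g w)) ∂(P : Measure (IPath X))) :
    (P : Measure (IPath X)).map θ = ((P : Measure (IPath X)) ⊗ₘ hs.kerAt hg).snd := by
  have : IsProbabilityMeasure ((P : Measure (IPath X)).map θ) :=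
    Measure.isProbabilityMeasure_map hθ.aemeasurable
  refine ext_of_forall_integral_eq_of_IsFiniteMeasure fun f => ?_
  rw [integral_map hθ.aemeasurable f.continuous.aestronglyMeasurable, h f, Measure.snd,
    integral_map measurable_snd.aemeasurable f.continuous.aestronglyMeasurable,
    Measure.integral_compProd]
  · rfl
  · exact integrable_bcf_comp _ f measurable_snd

lemma MSel.markov_meas (hs : MSel hD s) (x : X) (t : ℝ≥0) {F : IPath X → ℝ} (hF : Measurable F)
    {M : ℝ} (hM : ∀ w, |F w| ≤ M) :
    ∫ w, F (shC t w) ∂(s x : Measure (IPath X)) =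
      ∫ w, ∫ v, F v ∂(s (w t) : Measure (IPath X)) ∂(s x : Measure (IPath X)) := by
  have h := hs.measure_eq (measurable_ev t) (continuous_shC t).measurable (s x) (hs.markov x t)
  rw [← integral_map (f := F) (continuous_shC t).measurable.aemeasurable hF.aestronglyMeasurable, h,
    Measure.snd, integral_map measurable_snd.aemeasurable hF.aestronglyMeasurable,
    Measure.integral_compProd]
  · rfl
  · exact Integrable.of_bound (hF.comp measurable_snd).aestronglyMeasurable M
      (Eventually.of_forall fun p => hM _)

/-- law of the glued path -/
def MSel.glueLaw (hs : MSel hD s) (x : X) (t : ℝ≥0) : Measure (IPath X) :=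
  ((s x : Measure (IPath X)) ⊗ₘ hs.kerAt (measurable_ev t)).map (fun p => glue t p.1 p.2)

lemma MSel.integral_glueLaw (hs : MSel hD s) (x : X) (t : ℝ≥0) {F : IPath X → ℝ}
    (hF : Measurable F) {M : ℝ} (hM : ∀ w, |F w| ≤ M) :
    ∫ w, F w ∂(hs.glueLaw x t) = ∫ w, ∫ v, F (glue t w v) ∂(s (w t) : Measure (IPath X))
      ∂(s x : Measure (IPath X)) := by
  unfold MSel.glueLaw
  rw [integral_map (measurable_glue t).aemeasurable hF.aestronglyMeasurable,
    Measure.integral_compProd]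
  · rfl
  · exact Integrable.of_bound (hF.comp (measurable_glue t)).aestronglyMeasurable M
      (Eventually.of_forall fun p => hM _)

/-- inner integral -/
lemma MSel.measurable_inner (hs : MSel hD s) (t : ℝ≥0) {F : IPath X → ℝ} (hF : Measurable F) :
    Measurable (fun w => ∫ v, F (glue t w v) ∂(s (w t) : Measure (IPath X))) := by
  have := (StronglyMeasurable.integral_kernel_prod_right' (κ := hs.kerAt (measurable_ev t))
    (f := fun p : IPath X × IPath X => F (glue t p.1 p.2))
    (hF.comp (measurable_glue t)).stronglyMeasurable).measurable
  exact this

lemma abs_integral_le_of_bound {α : Type*} [MeasurableSpace α] {P : Measure α}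
    [IsProbabilityMeasure P] {F : α → ℝ} {M : ℝ} (hM : ∀ w, |F w| ≤ M) : |∫ w, F w ∂P| ≤ M := by
  have := norm_integral_le_of_norm_le_const (μ := P) (f := F) (C := M) (Eventually.of_forall hM)
  simpa using this

lemma MSel.glueLaw_MF (hs : MSel hD s) {f : (IPath X) →ᵇ ℝ} (hf : MF f) : ∀ x t,
    ∫ w, f w ∂(s x : Measure (IPath X)) = ∫ w, f w ∂(hs.glueLaw x t) := by
  induction hf with
  | one =>
    intro x t
    have : IsProbabilityMeasure (hs.glueLaw x t) :=
      Measure.isProbabilityMeasure_map (measurable_glue t).aemeasurable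
    simp
  | step g r f hf ih =>
    intro x t
    rw [hs.integral_glueLaw x t (stepF g r f).continuous.measurable
      (fun w => (stepF g r f).norm_coe_le_norm w)]
    rcases le_or_gt r t with hr | hr
    · let Φ : IPath X → ℝ := fun w => ∫ v, f (glue (t - r) w v)
        ∂(s (w (t - r)) : Measure (IPath X))
      have hΦm : Measurable Φ := hs.measurable_inner (t - r) f.continuous.measurable
      have hΦb : ∀ w, |Φ w| ≤ ‖f‖ := fun w =>
        abs_integral_le_of_bound fun v => f.norm_coe_le_norm _
      have hgF : ∀ F : IPath X → ℝ, (∀ w, |F w| ≤ ‖f‖) →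
          ∀ w : IPath X, |g (w 0) * F w| ≤ ‖g‖ * ‖f‖ := by
        intro F hF w
        rw [abs_mul]
        exact mul_le_mul (g.norm_coe_le_norm _) (hF w) (abs_nonneg _) (norm_nonneg _)
      have hg0 : Measurable (fun w : IPath X => g (w 0)) :=
        g.continuous.measurable.comp (measurable_ev 0)
      have hgen : ∀ F : IPath X → ℝ, ∀ y, ∫ v, g (v 0) * F v ∂(s y : Measure (IPath X)) =
          g y * ∫ v, F v ∂(s y : Measure (IPath X)) := by
        intro F y
        rw [← integral_const_mul]
        refine integral_congr_ae ?_
        filter_upwards [hs.start y] with w hw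
        rw [hw]
      have h1 := hs.markov_meas x r (F := fun w => g (w 0) * Φ w) (hg0.mul hΦm)
        (hgF Φ hΦb)
      have h2 := hs.markov_meas x r (F := fun w => g (w 0) * f w)
        (hg0.mul f.continuous.measurable) (hgF f f.norm_coe_le_norm)
      simp_rw [hgen] at h1 h2
      have h3 : ∀ y, ∫ v, Φ v ∂(s y : Measure (IPath X)) = ∫ v, f v ∂(s y : Measure (IPath X)) := by
        intro y
        rw [ih y (t - r), hs.integral_glueLaw y (t - r) f.continuous.measurable
          f.norm_coe_le_norm]
      simp_rw [h3] at h1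
      rw [← h2] at h1
      have h4 : ∀ w, ∫ v, stepF g r f (glue t w v) ∂(s (w t) : Measure (IPath X)) =
          g (shC r w 0) * Φ (shC r w) := by
        intro w
        simp only [Φ]
        rw [← integral_const_mul]
        have h5 : shC r w (t - r) = w t := by rw [shC_apply, add_tsub_cancel_of_le hr]
        rw [h5]
        refine integral_congr_ae (Eventually.of_forall fun v => ?_)
        simp only [stepF_apply, glue_le _ _ hr, shC_glue_le hr, shC_apply, add_zero]
      simp_rw [h4]
      rw [h1]
      refine integral_congr_ae (Eventually.of_forall fun w => ?_)
      simp only [stepF_apply, shC_apply, add_zero]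
    · have h1 := hs.markov x t (stepF g (r - t) f)
      have h2 : ∀ w, ∫ v, stepF g r f (glue t w v) ∂(s (w t) : Measure (IPath X)) =
          intBCF (stepF g (r - t) f) (s (w t)) := by
        intro w
        refine integral_congr_ae ?_
        filter_upwards [hs.start (w t)] with v hv
        rw [stepF_apply, stepF_apply]
        have h5 : shC r (glue t w v) = shC (r - t) v := by
          conv_rhs => rw [← shC_glue hv]
          rw [shC_shC, add_tsub_cancel_of_le hr.le]
        rw [h5, glue_gt hv hr]
      simp_rw [h2]
      rw [← h1]
      refine integral_congr_ae (Eventually.of_forall fun w => ?_)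
      simp only [stepF_apply, shC_apply, shC_shC, add_tsub_cancel_of_le hr.le]

lemma MSel.glueLaw_eq (hs : MSel hD s) (x : X) (t : ℝ≥0) :
    hs.glueLaw x t = (s x : Measure (IPath X)) := by
  have : IsProbabilityMeasure (hs.glueLaw x t) :=
      Measure.isProbabilityMeasure_map (measurable_glue t).aemeasurable
  exact eq_of_MF fun f hf => (hs.glueLaw_MF hf x t).symm

/-- gluing identity -/
lemma MSel.integral_glue (hs : MSel hD s) (x : X) (t : ℝ≥0) {F : IPath X → ℝ}
    (hF : Measurable F) {M : ℝ} (hM : ∀ w, |F w| ≤ M) :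
    ∫ w, F w ∂(s x : Measure (IPath X)) = ∫ w, ∫ v, F (glue t w v) ∂(s (w t) : Measure (IPath X))
      ∂(s x : Measure (IPath X)) := by
  rw [← hs.integral_glueLaw x t hF hM, hs.glueLaw_eq]

/-- simple Markov property -/
lemma MSel.simple_markov (hs : MSel hD s) (x : X) (t : ℝ≥0) {A : Set (IPath X)}
    (hA : MeasurableSet[natF X t] A) {F : IPath X → ℝ} (hF : Measurable F) {M : ℝ}
    (hM : ∀ w, |F w| ≤ M) :
    ∫ w in A, F (shC t w) ∂(s x : Measure (IPath X)) =
      ∫ w in A, ∫ v, F v ∂(s (w t) : Measure (IPath X)) ∂(s x : Measure (IPath X)) := by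
  have hA' : MeasurableSet A := natF_le t _ hA
  rw [← integral_indicator hA', ← integral_indicator hA']
  rw [hs.integral_glue x t (F := A.indicator fun w => F (shC t w)) (M := M)
    ((hF.comp (continuous_shC t).measurable).indicator hA')]
  · refine integral_congr_ae (Eventually.of_forall fun w => ?_)
    simp only
    by_cases hw : w ∈ A
    · rw [indicator_of_mem hw]
      refine integral_congr_ae ?_
      filter_upwards [hs.start (w t)] with v hv
      have : glue t w v ∈ A := (natF_mem_iff hA fun r hr => glue_le w v hr).2 hw
      rw [indicator_of_mem this, shC_glue hv]
    · rw [indicator_of_notMem hw]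
      have : ∀ v, glue t w v ∉ A := fun v h => hw ((natF_mem_iff hA fun r hr => glue_le w v hr).1 h)
      simp [this]
  · intro w
    by_cases hw : w ∈ A
    · rw [indicator_of_mem hw]; exact hM _
    · rw [indicator_of_notMem hw, abs_zero]; exact (abs_nonneg _).trans (hM w)

end markov

section claim

variable [PolishSpace X] [MeasurableSpace X] [BorelSpace X]
variable {C : X → Set (ProbabilityMeasure (IPath X))} {l : ℕ → ℝ} {ψ : ℕ → X →ᵇ ℝ}
variable {s : X → ProbabilityMeasure (IPath X)}

/-- positive combination of the functionals -/
def KData.FF (hD : KData C l ψ) (n : ℕ) (c : ℕ → ℝ) : (IPath X) →ᵇ ℝ :=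
  ∑ i ∈ Finset.range n, c i • hD.G i

lemma KData.FF_apply (hD : KData C l ψ) (n : ℕ) (c : ℕ → ℝ) (w : IPath X) :
    hD.FF n c w = ∑ i ∈ Finset.range n, c i * hD.G i w := by
  unfold KData.FF
  rw [BoundedContinuousFunction.coe_sum, Finset.sum_apply]
  rfl

lemma KData.intBCF_FF (hD : KData C l ψ) (n : ℕ) (c : ℕ → ℝ) (P : ProbabilityMeasure (IPath X)) :
    intBCF (hD.FF n c) P = ∑ i ∈ Finset.range n, c i * intBCF (hD.G i) P := by
  unfold intBCF
  simp_rw [hD.FF_apply]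
  rw [integral_finsetSum]
  · simp_rw [integral_const_mul]
  · intro i _
    exact ((hD.G i).integrable _).const_mul _

/-- discounted coefficients -/
def dis (l c : ℕ → ℝ) (δ : ℝ≥0) (i : ℕ) : ℝ := c i * Real.exp (-l i * δ)

/-- truncated part -/
def II (l : ℕ → ℝ) (ψ : ℕ → X →ᵇ ℝ) (n : ℕ) (c : ℕ → ℝ) (σ : ℝ≥0) (w : IPath X) : ℝ :=
  ∑ i ∈ Finset.range n, c i * Jfun (l i) (ψ i) σ w

/-- full value -/
def KData.ZZ (hD : KData C l ψ) (s : X → ProbabilityMeasure (IPath X)) (n : ℕ) (c : ℕ → ℝ)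
    (σ : ℝ≥0) (w : IPath X) : ℝ :=
  ∑ i ∈ Finset.range n, c i *
    (Jfun (l i) (ψ i) σ w + Real.exp (-l i * σ) * intBCF (hD.G i) (s (w σ)))

/-- error constant -/
def KData.BB (hD : KData C l ψ) (n : ℕ) (c : ℕ → ℝ) : ℝ :=
  ∑ i ∈ Finset.range n, c i * (l i * ‖hD.G i‖)

lemma KData.BB_nonneg (hD : KData C l ψ) (n : ℕ) {c : ℕ → ℝ} (hc : ∀ i, 0 ≤ c i) :
    0 ≤ hD.BB n c :=
  Finset.sum_nonneg fun i _ => mul_nonneg (hc i) (mul_nonneg (hD.lpos i).le (norm_nonneg _))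

lemma KData.dis_nonneg {c : ℕ → ℝ} (hc : ∀ i, 0 ≤ c i) (δ : ℝ≥0) (i : ℕ) : 0 ≤ dis l c δ i :=
  mul_nonneg (hc i) (Real.exp_pos _).le

lemma KData.BB_dis_le (hD : KData C l ψ) (n : ℕ) {c : ℕ → ℝ} (hc : ∀ i, 0 ≤ c i) (δ : ℝ≥0) :
    hD.BB n (dis l c δ) ≤ hD.BB n c := by
  refine Finset.sum_le_sum fun i _ => ?_
  refine mul_le_mul_of_nonneg_right ?_ (mul_nonneg (hD.lpos i).le (norm_nonneg _))
  exact mul_le_of_le_one_right (hc i) (exp_neg_le_one (hD.lpos i) δ)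

lemma KData.measurable_II (hD : KData C l ψ) (n : ℕ) (c : ℕ → ℝ) {τ : IPath X → ℝ≥0}
    (hτ : Measurable τ) : Measurable (fun w => II l ψ n c (τ w) w) := by
  unfold II
  exact Finset.measurable_sum _ fun i _ => (measurable_J (hD.lpos i) (ψ i) hτ).const_mul _

lemma KData.abs_II_le (hD : KData C l ψ) (n : ℕ) (c : ℕ → ℝ) (σ : ℝ≥0) (w : IPath X) :
    |II l ψ n c σ w| ≤ ∑ i ∈ Finset.range n, |c i| * (2 * ‖hD.G i‖) := by
  refine (Finset.abs_sum_le_sum_abs _ _).trans (Finset.sum_le_sum fun i _ => ?_)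
  rw [abs_mul]
  exact mul_le_mul_of_nonneg_left (abs_J_le (hD.lpos i) (ψ i) σ w) (abs_nonneg _)

lemma KData.measurable_ZZ (hD : KData C l ψ)
    (hs : Measurable (fun x => (s x : Measure (IPath X)))) (n : ℕ) (c : ℕ → ℝ)
    {τ : IPath X → ℝ≥0} (hτ : Measurable τ) : Measurable (fun w => hD.ZZ s n c (τ w) w) := by
  unfold KData.ZZ
  refine Finset.measurable_sum _ fun i _ => Measurable.const_mul ?_ _
  have h1 := measurable_J (hD.lpos i) (ψ i) hτ
  have h2 : Measurable (fun w : IPath X => intBCF (hD.G i) (s (w (τ w)))) :=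
    (measurable_intBCF_sel hs (hD.G i)).comp (measurable_piAt hτ)
  have h3 : Measurable (fun w => (τ w : ℝ)) := measurable_coe_nnreal_real.comp hτ
  fun_prop

lemma KData.abs_ZZ_le (hD : KData C l ψ) (n : ℕ) (c : ℕ → ℝ) (σ : ℝ≥0) (w : IPath X) :
    |hD.ZZ s n c σ w| ≤ ∑ i ∈ Finset.range n, |c i| * (3 * ‖hD.G i‖) := by
  refine (Finset.abs_sum_le_sum_abs _ _).trans (Finset.sum_le_sum fun i _ => ?_)
  rw [abs_mul]
  refine mul_le_mul_of_nonneg_left ?_ (abs_nonneg _)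
  refine (abs_add_le _ _).trans ?_
  have h1 : |Jfun (l i) (ψ i) σ w| ≤ 2 * ‖hD.G i‖ := abs_J_le (hD.lpos i) (ψ i) σ w
  have h2 : |Real.exp (-l i * σ) * intBCF (hD.G i) (s (w σ))| ≤ 1 * ‖hD.G i‖ := by
    rw [abs_mul, abs_of_pos (Real.exp_pos _)]
    exact mul_le_mul (exp_neg_le_one (hD.lpos i) σ) (abs_intBCF_le _ _) (abs_nonneg _) zero_le_one
  linarith

lemma KData.J_add (hD : KData C l ψ) (i : ℕ) {δ σ : ℝ≥0} (h : δ ≤ σ) (w : IPath X) :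
    Jfun (l i) (ψ i) σ w = Jfun (l i) (ψ i) δ w +
      Real.exp (-l i * δ) * Jfun (l i) (ψ i) (σ - δ) (shC δ w) := by
  rw [Jfun_eq (hD.lpos i), Jfun_eq (hD.lpos i), Jfun_eq (hD.lpos i), shC_shC,
    add_tsub_cancel_of_le h, mul_sub, ← mul_assoc, ← Real.exp_add, NNReal.coe_sub h]
  have : -l i * (δ : ℝ) + -l i * ((σ : ℝ) - δ) = -l i * σ := by ring
  rw [this]
  ring

lemma KData.ZZ_add (hD : KData C l ψ) (n : ℕ) (c : ℕ → ℝ) {δ σ : ℝ≥0} (h : δ ≤ σ) (w : IPath X) :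
    hD.ZZ s n c σ w = II l ψ n c δ w + hD.ZZ s n (dis l c δ) (σ - δ) (shC δ w) := by
  unfold KData.ZZ II dis
  rw [← Finset.sum_add_distrib]
  refine Finset.sum_congr rfl fun i _ => ?_
  rw [hD.J_add i h, shC_apply, add_tsub_cancel_of_le h]
  have : Real.exp (-l i * σ) = Real.exp (-l i * δ) * Real.exp (-l i * ((σ - δ : ℝ≥0) : ℝ)) := by
    rw [← Real.exp_add, NNReal.coe_sub h]
    congr 1; ring
  rw [this]
  ring

/-- one-step improvement -/
lemma KData.step_lemma (hD : KData C l ψ) (hs : MSel hD s) (n : ℕ) {c : ℕ → ℝ}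
    (hc : ∀ i, 0 ≤ c i) (y : X) {σ : IPath X → ℝ≥0} (hσ : IsStopT σ) (hσ0 : ∀ w, 0 < σ w)
    {δ : ℝ≥0} (hδ : ∀ w, σ w ≤ δ) :
    ∫ w, (II l ψ n c (σ w) w + hSupp C (w (σ w)) (hD.FF n (dis l c δ)))
      ∂(s y : Measure (IPath X)) ≤ hSupp C y (hD.FF n c) := by
  have hσm := hσ.measurable
  obtain ⟨q, hqC, hqo⟩ := (hD.nice.amax (hD.FF n (dis l c δ))).exists_selection
  have hqm := measurable_toMeasure hqo
  obtain ⟨S, hS⟩ := exists_mix hqm (s y : Measure (IPath X)) (measurable_piAt hσm)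
  have hSK := mix_mem_K hD.nice (fun x => (hqC x).1) hqm (s y) hσm hS
  obtain ⟨Q, hQ, hQS, hJ⟩ := hD.reach y (s y) (hs.memC y) σ hσ hσ0 S hSK
  refine le_trans ?_ (le_hSupp hQ (hD.FF n c))
  have h1 : ∫ w, hSupp C (w (σ w)) (hD.FF n (dis l c δ)) ∂(s y : Measure (IPath X)) =
      intBCF (hD.FF n (dis l c δ)) S := by
    rw [hS]
    exact integral_congr_ae (Eventually.of_forall fun w => (hqC _).2.symm)
  rw [integral_add, h1, hD.intBCF_FF, hD.intBCF_FF]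
  · have h2 : ∫ w, II l ψ n c (σ w) w ∂(s y : Measure (IPath X)) =
        ∑ i ∈ Finset.range n, c i * ∫ w, Jfun (l i) (ψ i) (σ w) w ∂(s y : Measure (IPath X)) := by
      unfold II
      rw [integral_finsetSum]
      · simp_rw [integral_const_mul]
      · intro i _
        exact (integrable_J (hD.lpos i) (ψ i) hσm _).const_mul _
    rw [h2, ← Finset.sum_add_distrib]
    refine Finset.sum_le_sum fun i _ => ?_
    have h3 : intBCF (hD.G i) Q = ∫ w, Jfun (l i) (ψ i) (σ w) w ∂(Q : Measure (IPath X)) +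
        ∫ w, Real.exp (-l i * σ w) * hD.G i (shiftAt σ w) ∂(Q : Measure (IPath X)) := by
      rw [← integral_add (integrable_J (hD.lpos i) (ψ i) hσm _)]
      · exact integral_congr_ae (Eventually.of_forall fun w =>
          Gfun_decomp (hD.lpos i) (ψ i) (σ w) w)
      · refine Integrable.of_bound (C := ‖hD.G i‖) ?_ (Eventually.of_forall fun w => ?_)
        · have h3 : Measurable (fun w => (σ w : ℝ)) := measurable_coe_nnreal_real.comp hσm
          have h4 : Measurable (fun w => hD.G i (shiftAt σ w)) :=
            (hD.G i).continuous.measurable.comp (measurable_shiftAt hσm)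
          exact Measurable.aestronglyMeasurable (by fun_prop)
        · rw [norm_mul, Real.norm_of_nonneg (Real.exp_pos _).le]
          calc _ ≤ 1 * ‖hD.G i‖ := mul_le_mul (exp_neg_le_one (hD.lpos i) _)
                ((hD.G i).norm_coe_le_norm _) (norm_nonneg _) zero_le_one
            _ = _ := one_mul _
    have h4 : Real.exp (-l i * δ) * intBCF (hD.G i) S ≤
        ∫ w, Real.exp (-l i * σ w) * hD.G i (shiftAt σ w) ∂(Q : Measure (IPath X)) := by
      rw [intBCF_of_isShift hσm hQS, ← integral_const_mul]
      refine integral_mono ?_ ?_ fun w => ?_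
      · exact (integrable_bcf_comp _ (hD.G i) (measurable_shiftAt hσm)).const_mul _
      · refine Integrable.of_bound (C := ‖hD.G i‖) ?_ (Eventually.of_forall fun w => ?_)
        · have h3 : Measurable (fun w => (σ w : ℝ)) := measurable_coe_nnreal_real.comp hσm
          have h4 : Measurable (fun w => hD.G i (shiftAt σ w)) :=
            (hD.G i).continuous.measurable.comp (measurable_shiftAt hσm)
          exact Measurable.aestronglyMeasurable (by fun_prop)
        · rw [norm_mul, Real.norm_of_nonneg (Real.exp_pos _).le]
          calc _ ≤ 1 * ‖hD.G i‖ := mul_le_mul (exp_neg_le_one (hD.lpos i) _)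
                ((hD.G i).norm_coe_le_norm _) (norm_nonneg _) zero_le_one
            _ = _ := one_mul _
      · refine mul_le_mul_of_nonneg_right ?_ (hD.G_nonneg i _)
        rw [Real.exp_le_exp]
        have : (σ w : ℝ) ≤ δ := by exact_mod_cast hδ w
        nlinarith [hD.lpos i]
    have h5 := hJ i
    unfold dis
    rw [mul_assoc, ← mul_add]
    refine mul_le_mul_of_nonneg_left ?_ (hc i)
    rw [h3]
    exact add_le_add h5 h4
  · exact Integrable.of_bound (hD.measurable_II n c hσm).aestronglyMeasurable _
      (Eventually.of_forall fun w => hD.abs_II_le n c (σ w) w)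
  · exact hD.nice.integrable_hSupp _ _ (measurable_piAt hσm)

lemma IsStopT.min_const {τ : IPath X → ℝ≥0} (hτ : IsStopT τ) (δ : ℝ≥0) :
    IsStopT (fun w => min (τ w) δ) := by
  intro r
  by_cases h : δ ≤ r
  · have : {w : IPath X | min (τ w) δ ≤ r} = univ := by
      ext w; simp [h]
    rw [this]; exact MeasurableSet.univ
  · have : {w : IPath X | min (τ w) δ ≤ r} = {w | τ w ≤ r} := by
      ext w; simp [h]
    rw [this]; exact hτ r

lemma KData.ZZ_le_short (hD : KData C l ψ) (hs : MSel hD s) (n : ℕ) {c : ℕ → ℝ}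
    (hc : ∀ i, 0 ≤ c i) {σ δ : ℝ≥0} (h : σ ≤ δ) (w : IPath X) :
    hD.ZZ s n c σ w ≤ II l ψ n c σ w + hSupp C (w σ) (hD.FF n (dis l c δ)) + δ * hD.BB n c := by
  have h1 := le_hSupp (hs.memC (w σ)) (hD.FF n (dis l c δ))
  rw [hD.intBCF_FF] at h1
  have h2 : hD.ZZ s n c σ w ≤ II l ψ n c σ w +
      ∑ i ∈ Finset.range n, dis l c δ i * intBCF (hD.G i) (s (w σ)) + δ * hD.BB n c := by
    unfold KData.ZZ II dis KData.BB
    rw [Finset.mul_sum, ← Finset.sum_add_distrib, ← Finset.sum_add_distrib]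
    refine Finset.sum_le_sum fun i _ => ?_
    have hm0 : 0 ≤ intBCF (hD.G i) (s (w σ)) := integral_nonneg fun v => hD.G_nonneg i v
    have hm1 := (le_abs_self _).trans (abs_intBCF_le (hD.G i) (s (w σ)))
    have hl := hD.lpos i
    have he : Real.exp (-l i * σ) ≤ Real.exp (-l i * δ) + l i * δ := by
      have h3 : 1 - l i * δ ≤ Real.exp (-l i * δ) := by
        have := Real.add_one_le_exp (-l i * δ); linarith
      have h4 := exp_neg_le_one hl σ
      linarith
    have h5 : Real.exp (-l i * σ) * intBCF (hD.G i) (s (w σ)) ≤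
        Real.exp (-l i * δ) * intBCF (hD.G i) (s (w σ)) + δ * (l i * ‖hD.G i‖) := by
      have h6 := mul_le_mul_of_nonneg_right he hm0
      have h7 : l i * δ * intBCF (hD.G i) (s (w σ)) ≤ l i * δ * ‖hD.G i‖ :=
        mul_le_mul_of_nonneg_left hm1 (mul_nonneg hl.le δ.coe_nonneg)
      linarith
    have h8 := mul_le_mul_of_nonneg_left h5 (hc i)
    linarith
  linarith

lemma isStopT_cond {τ : IPath X → ℝ≥0} (hτ : IsStopT τ) (δ : ℝ≥0) (ω : IPath X) :
    IsStopT (fun v => τ (glue δ ω v) - δ) := by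
  intro r
  have : {v : IPath X | τ (glue δ ω v) - δ ≤ r} = (glue δ ω) ⁻¹' {w | τ w ≤ r + δ} := by
    ext v
    simp only [mem_ofPred_eq, mem_preimage, tsub_le_iff_right]
  rw [this]
  have hm : Measurable[natF X r, natF X (r + δ)] (glue δ ω) := by
    refine measurable_to_natF (m := natF X r) fun u hu => ?_
    refine measurable_glue_gen (mα := natF X r) δ u (a := fun _ => ω) (b := fun v => v)
      measurable_const measurable_const
      (measurable_ev_natF zero_le) (fun _ => measurable_ev_natF ?_)
    exact tsub_le_iff_right.2 hu
  exact hm (hτ (r + δ))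

lemma KData.claim_ind (hD : KData C l ψ) (hs : MSel hD s) (n : ℕ) (δ : ℝ≥0) (hδ : 0 < δ) (K : ℕ) :
    ∀ c : ℕ → ℝ, (∀ i, 0 ≤ c i) → ∀ x : X, ∀ τ : IPath X → ℝ≥0, IsStopT τ → (∀ w, 0 < τ w) →
      (∀ w, τ w ≤ K * δ) → ∫ w, hD.ZZ s n c (τ w) w ∂(s x : Measure (IPath X)) ≤
        hSupp C x (hD.FF n c) + δ * hD.BB n c := by
  induction K with
  | zero =>
    intro c hc x τ hτ hτ0 hτK
    have h1 := hτ0 (ContinuousMap.const _ x)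
    have h2 := hτK (ContinuousMap.const _ x)
    simp only [Nat.cast_zero, zero_mul] at h2
    exact absurd h1 (not_lt.2 h2)
  | succ K ih =>
    intro c hc x τ hτ hτ0 hτK
    have hτm := hτ.measurable
    let σ : IPath X → ℝ≥0 := fun w => min (τ w) δ
    have hσ : IsStopT σ := hτ.min_const δ
    have hσm := hσ.measurable
    have hσ0 : ∀ w, 0 < σ w := fun w => lt_min (hτ0 w) hδ
    have hσδ : ∀ w, σ w ≤ δ := fun w => min_le_right _ _
    have hstep := hD.step_lemma hs n hc x hσ hσ0 hσδ
    let F := hD.FF n (dis l c δ)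
    let U0 : IPath X → ℝ := fun w => II l ψ n c (σ w) w + hSupp C (w (σ w)) F
    have hU0m : Measurable U0 :=
      (hD.measurable_II n c hσm).add ((hD.nice.measurable_hSupp F).comp (measurable_piAt hσm))
    have hU0b : ∀ w, |U0 w| ≤ ∑ i ∈ Finset.range n, |c i| * (2 * ‖hD.G i‖) + ‖F‖ := fun w =>
      (abs_add_le _ _).trans (add_le_add (hD.abs_II_le n c _ w) (hD.nice.abs_hSupp_le _ F))
    have hZm := hD.measurable_ZZ hs.meas n c hτm
    have hZb : ∀ w, |hD.ZZ s n c (τ w) w| ≤ ∑ i ∈ Finset.range n, |c i| * (3 * ‖hD.G i‖) :=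
      fun w => hD.abs_ZZ_le n c (τ w) w
    have hint : ∀ (G : IPath X → ℝ) (M : ℝ), Measurable G → (∀ w, |G w| ≤ M) →
        ∀ P : ProbabilityMeasure (IPath X), Integrable G (P : Measure (IPath X)) :=
      fun G M hG hM P => Integrable.of_bound hG.aestronglyMeasurable M (Eventually.of_forall hM)
    have hgm : ∀ ω : IPath X, Measurable (glue δ ω) := fun ω =>
      (measurable_glue δ).comp (measurable_const.prodMk measurable_id)
    suffices hmain : ∫ w, hD.ZZ s n c (τ w) w ∂(s x : Measure (IPath X)) ≤
        ∫ w, (U0 w + δ * hD.BB n c) ∂(s x : Measure (IPath X)) by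
      refine hmain.trans ?_
      rw [integral_add (hint U0 _ hU0m hU0b _) (integrable_const _)]
      simp only [integral_const, probReal_univ, one_smul]
      exact add_le_add hstep le_rfl
    rw [integral_add (hint U0 _ hU0m hU0b _) (integrable_const _)]
    rw [hs.integral_glue x δ hZm hZb, hs.integral_glue x δ hU0m hU0b]
    rw [← integral_add _ (integrable_const _)]
    · refine integral_mono ?_ ?_ fun ω => ?_
      · exact hint _ _ (hs.measurable_inner δ hZm)
          (fun ω => abs_integral_le_of_bound fun v => hZb _) _
      · exact (hint _ _ (hs.measurable_inner δ hU0m)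
          (fun ω => abs_integral_le_of_bound fun v => hU0b _) _).add (integrable_const _)
      · have hc1 : ∫ v : IPath X, (δ : ℝ) * hD.BB n c ∂(s (ω δ) : Measure (IPath X)) =
          δ * hD.BB n c := by simp
        have hiU : Integrable (fun v => U0 (glue δ ω v)) (s (ω δ) : Measure (IPath X)) :=
          hint _ _ (hU0m.comp (hgm ω)) (fun v => hU0b _) _
        have hiZ : Integrable (fun v => hD.ZZ s n c (τ (glue δ ω v)) (glue δ ω v))
            (s (ω δ) : Measure (IPath X)) :=
          hint _ _ (hZm.comp (hgm ω)) (fun v => hZb _) _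
        change ∫ v, hD.ZZ s n c (τ (glue δ ω v)) (glue δ ω v) ∂(s (ω δ) : Measure (IPath X)) ≤
          ∫ v, U0 (glue δ ω v) ∂(s (ω δ) : Measure (IPath X)) + _
        rcases le_or_gt (τ ω) δ with hω | hω
        · rw [← hc1, ← integral_add hiU (integrable_const _)]
          refine integral_mono hiZ (hiU.add (integrable_const _)) fun v => ?_
          have h1 : τ (glue δ ω v) ≤ δ :=
            (natF_mem_iff (hτ δ) fun r hr => glue_le ω v hr).2 hω
          have h2 : σ (glue δ ω v) = τ (glue δ ω v) := min_eq_left h1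
          have h3 := hD.ZZ_le_short hs n hc h1 (glue δ ω v)
          simp only [U0, h2]
          exact h3
        · have h1 : ∀ v, δ < τ (glue δ ω v) := by
            intro v
            by_contra hcon
            exact not_le.2 hω ((natF_mem_iff (hτ δ) fun r hr => glue_le ω v hr).1 (not_lt.1 hcon))
          have h2 : ∀ v, σ (glue δ ω v) = δ := fun v => min_eq_right (h1 v).le
          let τ' : IPath X → ℝ≥0 := fun v => τ (glue δ ω v) - δ
          have hτ' : IsStopT τ' := isStopT_cond hτ δ ω
          have hih := ih (dis l c δ) (KData.dis_nonneg hc δ) (ω δ) τ' hτ'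
            (fun v => tsub_pos_of_lt (h1 v)) (fun v => by
              have := hτK (glue δ ω v)
              refine tsub_le_iff_right.2 (this.trans (le_of_eq ?_))
              push_cast; ring)
          have hIm : Measurable (fun w => II l ψ n c δ w) :=
            hD.measurable_II n c (τ := fun _ => δ) measurable_const
          have hiI : Integrable (fun v => II l ψ n c δ (glue δ ω v))
              (s (ω δ) : Measure (IPath X)) :=
            hint _ _ (hIm.comp (hgm ω)) (fun v => hD.abs_II_le n c δ _) _
          have e1 : ∫ v, hD.ZZ s n c (τ (glue δ ω v)) (glue δ ω v) ∂(s (ω δ) : Measure (IPath X)) =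
              ∫ v, II l ψ n c δ (glue δ ω v) ∂(s (ω δ) : Measure (IPath X)) +
              ∫ v, hD.ZZ s n (dis l c δ) (τ' v) v ∂(s (ω δ) : Measure (IPath X)) := by
            rw [← integral_add hiI (hint _ _ (hD.measurable_ZZ hs.meas n _ hτ'.measurable)
              (fun v => hD.abs_ZZ_le n _ _ v) _)]
            refine integral_congr_ae ?_
            filter_upwards [hs.start (ω δ)] with v hv
            rw [hD.ZZ_add n c (h1 v).le, shC_glue hv]
          have e2 : ∫ v, U0 (glue δ ω v) ∂(s (ω δ) : Measure (IPath X)) =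
              ∫ v, II l ψ n c δ (glue δ ω v) ∂(s (ω δ) : Measure (IPath X)) + hSupp C (ω δ) F := by
            have e3 : ∫ v : IPath X, hSupp C (ω δ) F ∂(s (ω δ) : Measure (IPath X)) =
              hSupp C (ω δ) F := by simp
            rw [← e3, ← integral_add hiI (integrable_const _)]
            refine integral_congr_ae (Eventually.of_forall fun v => ?_)
            simp only [U0, h2, glue_le ω v le_rfl]
          rw [e1, e2]
          have := mul_le_mul_of_nonneg_left (hD.BB_dis_le n hc δ) δ.coe_nonneg
          linarith
    · exact hint _ _ (hs.measurable_inner δ hU0m)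
          (fun ω => abs_integral_le_of_bound fun v => hU0b _) _

/-- the key claim -/
lemma KData.claim (hD : KData C l ψ) (hs : MSel hD s) (n : ℕ) {c : ℕ → ℝ} (hc : ∀ i, 0 ≤ c i)
    (x : X) {τ : IPath X → ℝ≥0} (hτ : IsStopT τ) (hτ0 : ∀ w, 0 < τ w) {N : ℝ≥0}
    (hN : ∀ w, τ w ≤ N) :
    ∫ w, hD.ZZ s n c (τ w) w ∂(s x : Measure (IPath X)) ≤ hSupp C x (hD.FF n c) := by
  have hB := hD.BB_nonneg n hc
  refine le_of_forall_pos_le_add fun ε hε => ?_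
  let δ : ℝ≥0 := ⟨ε / (hD.BB n c + 1), by positivity⟩
  have hδ : 0 < δ := by
    have : 0 < ε / (hD.BB n c + 1) := by positivity
    exact_mod_cast this
  obtain ⟨K, hK⟩ := Archimedean.arch N hδ
  rw [nsmul_eq_mul] at hK
  refine (hD.claim_ind hs n δ hδ K c hc x τ hτ hτ0 fun w => (hN w).trans hK).trans ?_
  have : (δ : ℝ) * hD.BB n c ≤ ε := by
    change ε / (hD.BB n c + 1) * hD.BB n c ≤ ε
    rw [div_mul_eq_mul_div, div_le_iff₀ (by positivity)]
    nlinarith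
  linarith

end claim

section strong

variable [PolishSpace X] [MeasurableSpace X] [BorelSpace X]
variable {C : X → Set (ProbabilityMeasure (IPath X))} {l : ℕ → ℝ} {ψ : ℕ → X →ᵇ ℝ}
variable {s : X → ProbabilityMeasure (IPath X)}

lemma face_iter (hC : NiceMap C) (g : ℕ → (IPath X) →ᵇ ℝ) (x : X) (n : ℕ) :
    ∀ (a : ℝ) (f : (IPath X) →ᵇ ℝ),
      (∀ c : ℕ → ℝ, (∀ i, 0 ≤ c i) →
        a + ∑ i ∈ Finset.range n, c i * hSupp (lexC C g i) x (g i) ≤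
          hSupp C x (f + ∑ i ∈ Finset.range n, c i • g i)) → a ≤ hSupp (lexC C g n) x f := by
  induction n with
  | zero =>
    intro a f h
    have h1 := h (fun _ => 0) (fun _ => le_rfl)
    simp only [Finset.range_zero, Finset.sum_empty, add_zero] at h1
    exact h1
  | succ n ih =>
    intro a f h
    refine ge_of_tendsto' (hSupp_face_tendsto (hC.lexC g n) x f (g n)) fun k => ?_
    have := ih (a + k * hSupp (lexC C g n) x (g n)) (f + (k : ℝ) • g n) (by
      intro c hc
      have h1 := h (fun i => if i < n then c i else k) (fun i => by
        split_ifs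
        · exact hc i
        · positivity)
      rw [Finset.sum_range_succ, Finset.sum_range_succ] at h1
      have e1 : ∑ i ∈ Finset.range n, (if i < n then c i else (k : ℝ)) *
          hSupp (lexC C g i) x (g i) = ∑ i ∈ Finset.range n, c i * hSupp (lexC C g i) x (g i) :=
        Finset.sum_congr rfl fun i hi => by rw [if_pos (Finset.mem_range.1 hi)]
      have e2 : ∑ i ∈ Finset.range n, (if i < n then c i else (k : ℝ)) • g i =
          ∑ i ∈ Finset.range n, c i • g i :=
        Finset.sum_congr rfl fun i hi => by rw [if_pos (Finset.mem_range.1 hi)]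
      rw [e1, e2, if_neg (lt_irrefl n)] at h1
      have e3 : f + (k : ℝ) • g n + ∑ i ∈ Finset.range n, c i • g i =
          f + (∑ i ∈ Finset.range n, c i • g i + (k : ℝ) • g n) := by abel
      rw [e3]
      linarith)
    linarith

/-- the Markov defect -/
def KData.DD (hD : KData C l ψ) (s : X → ProbabilityMeasure (IPath X)) (i : ℕ) (σ : ℝ≥0)
    (w : IPath X) : ℝ := hD.G i (shC σ w) - intBCF (hD.G i) (s (w σ))

/-- the discounted Markov defect -/
def KData.YY (hD : KData C l ψ) (s : X → ProbabilityMeasure (IPath X)) (i : ℕ) (σ : ℝ≥0)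
    (w : IPath X) : ℝ := Real.exp (-l i * σ) * hD.DD s i σ w

lemma KData.measurable_DD (hD : KData C l ψ)
    (hs : Measurable (fun x => (s x : Measure (IPath X)))) (i : ℕ)
    {τ : IPath X → ℝ≥0} (hτ : Measurable τ) : Measurable (fun w => hD.DD s i (τ w) w) := by
  have h2 : Measurable (fun w : IPath X => intBCF (hD.G i) (s (w (τ w)))) :=
    (measurable_intBCF_sel hs (hD.G i)).comp (measurable_piAt hτ)
  have h4 : Measurable (fun w => hD.G i (shC (τ w) w)) :=
    (hD.G i).continuous.measurable.comp (measurable_shiftAt hτ)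
  exact h4.sub h2

lemma KData.abs_DD_le (hD : KData C l ψ) (i : ℕ) (σ : ℝ≥0) (w : IPath X) :
    |hD.DD s i σ w| ≤ 2 * ‖hD.G i‖ := by
  have h1 := (hD.G i).norm_coe_le_norm (shC σ w)
  have h2 := abs_intBCF_le (hD.G i) (s (w σ))
  rw [Real.norm_eq_abs] at h1
  refine (abs_sub _ _).trans ?_
  linarith

lemma KData.measurable_YY (hD : KData C l ψ)
    (hs : Measurable (fun x => (s x : Measure (IPath X)))) (i : ℕ)
    {τ : IPath X → ℝ≥0} (hτ : Measurable τ) : Measurable (fun w => hD.YY s i (τ w) w) := by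
  have h3 : Measurable (fun w => (τ w : ℝ)) := measurable_coe_nnreal_real.comp hτ
  have h4 := hD.measurable_DD hs i hτ
  unfold KData.YY
  fun_prop

lemma KData.abs_YY_le (hD : KData C l ψ) (i : ℕ) (σ : ℝ≥0) (w : IPath X) :
    |hD.YY s i σ w| ≤ 2 * ‖hD.G i‖ := by
  unfold KData.YY
  rw [abs_mul, abs_of_pos (Real.exp_pos _)]
  calc _ ≤ 1 * (2 * ‖hD.G i‖) := mul_le_mul (exp_neg_le_one (hD.lpos i) σ) (hD.abs_DD_le i σ w)
        (abs_nonneg _) zero_le_one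
    _ = _ := one_mul _

lemma integrable_of_meas_bdd {α : Type*} [MeasurableSpace α] {P : Measure α} [IsFiniteMeasure P]
    {F : α → ℝ} (hF : Measurable F) {M : ℝ} (hM : ∀ w, |F w| ≤ M) : Integrable F P :=
  Integrable.of_bound hF.aestronglyMeasurable M (Eventually.of_forall hM)

lemma KData.integral_ZZ (hD : KData C l ψ) (hs : MSel hD s) (n : ℕ) (c : ℕ → ℝ) (x : X)
    {τ : IPath X → ℝ≥0} (hτ : Measurable τ) :
    ∫ w, hD.ZZ s n c (τ w) w ∂(s x : Measure (IPath X)) =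
      ∑ i ∈ Finset.range n, c i * (intBCF (hD.G i) (s x) -
        ∫ w, hD.YY s i (τ w) w ∂(s x : Measure (IPath X))) := by
  have h : ∀ w, hD.ZZ s n c (τ w) w =
      ∑ i ∈ Finset.range n, c i * (hD.G i w - hD.YY s i (τ w) w) := by
    intro w
    refine Finset.sum_congr rfl fun i _ => ?_
    rw [Jfun_eq (hD.lpos i)]
    unfold KData.YY KData.DD KData.G
    ring
  simp_rw [h]
  have hi : ∀ i, Integrable (fun w => hD.YY s i (τ w) w) (s x : Measure (IPath X)) := fun i =>
    integrable_of_meas_bdd (hD.measurable_YY hs.meas i hτ) (fun w => hD.abs_YY_le i _ w)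
  rw [integral_finsetSum]
  · refine Finset.sum_congr rfl fun i _ => ?_
    rw [integral_const_mul, integral_sub ((hD.G i).integrable _) (hi i)]
    rfl
  · intro i _
    exact (((hD.G i).integrable _).sub (hi i)).const_mul _

lemma KData.YY_nonneg (hD : KData C l ψ) (hs : MSel hD s) (n : ℕ) (x : X)
    {τ : IPath X → ℝ≥0} (hτ : IsStopT τ) (hτ0 : ∀ w, 0 < τ w) {N : ℝ≥0} (hN : ∀ w, τ w ≤ N)
    (h0 : ∀ i < n, ∫ w, hD.YY s i (τ w) w ∂(s x : Measure (IPath X)) = 0) :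
    0 ≤ ∫ w, hD.YY s n (τ w) w ∂(s x : Measure (IPath X)) := by
  have hm : ∀ i, hSupp (lexC C hD.G i) x (hD.G i) = intBCF (hD.G i) (s x) :=
    fun i => (lexInf_eq_hSupp (hs.mem x) i).symm
  have := face_iter hD.nice hD.G x n (intBCF (hD.G n) (s x) -
    ∫ w, hD.YY s n (τ w) w ∂(s x : Measure (IPath X))) (hD.G n) (by
      intro c hc
      have h1 := hD.claim hs (n + 1) (c := fun i => if i < n then c i else 1) (fun i => by
        split_ifs
        · exact hc i
        · exact zero_le_one) x hτ hτ0 hN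
      rw [hD.integral_ZZ hs _ _ _ hτ.measurable, KData.FF, Finset.sum_range_succ,
        Finset.sum_range_succ] at h1
      have e1 : ∑ i ∈ Finset.range n, (if i < n then c i else (1 : ℝ)) *
          (intBCF (hD.G i) (s x) - ∫ w, hD.YY s i (τ w) w ∂(s x : Measure (IPath X))) =
          ∑ i ∈ Finset.range n, c i * hSupp (lexC C hD.G i) x (hD.G i) :=
        Finset.sum_congr rfl fun i hi => by
          rw [if_pos (Finset.mem_range.1 hi), h0 i (Finset.mem_range.1 hi), hm, sub_zero]
      have e2 : ∑ i ∈ Finset.range n, (if i < n then c i else (1 : ℝ)) • hD.G i =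
          ∑ i ∈ Finset.range n, c i • hD.G i :=
        Finset.sum_congr rfl fun i hi => by rw [if_pos (Finset.mem_range.1 hi)]
      rw [e1, e2, if_neg (lt_irrefl n), one_mul, one_smul] at h1
      rw [add_comm (hD.G n)]
      linarith)
  rw [hm] at this
  linarith

open scoped Classical in
/-- restriction of a stopping time to a set -/
def restrT (τ : IPath X → ℝ≥0) (A : Set (IPath X)) (N : ℝ≥0) (w : IPath X) : ℝ≥0 :=
  if w ∈ A then τ w else N

lemma restrT_mem {τ : IPath X → ℝ≥0} {A : Set (IPath X)} {N : ℝ≥0} {w : IPath X} (h : w ∈ A) :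
    restrT τ A N w = τ w := if_pos h

lemma restrT_notMem {τ : IPath X → ℝ≥0} {A : Set (IPath X)} {N : ℝ≥0} {w : IPath X} (h : w ∉ A) :
    restrT τ A N w = N := if_neg h

lemma isStopT_restrT {τ : IPath X → ℝ≥0} {A : Set (IPath X)} (hA : MemFstopT τ A) {N : ℝ≥0}
    (hN : ∀ w, τ w ≤ N) : IsStopT (restrT τ A N) := by
  intro r
  rcases le_or_gt N r with h | h
  · have : {w : IPath X | restrT τ A N w ≤ r} = univ := by
      ext w
      simp only [mem_ofPred_eq, mem_univ, iff_true]
      by_cases hw : w ∈ A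
      · rw [restrT_mem hw]; exact (hN w).trans h
      · rw [restrT_notMem hw]; exact h
    rw [this]; exact MeasurableSet.univ
  · have : {w : IPath X | restrT τ A N w ≤ r} = A ∩ {w | τ w ≤ r} := by
      ext w
      simp only [mem_ofPred_eq, mem_inter_iff]
      by_cases hw : w ∈ A
      · rw [restrT_mem hw]; simp [hw]
      · rw [restrT_notMem hw]; simp [hw, h]
    rw [this]; exact hA.2 r

lemma memF_natF {τ : IPath X → ℝ≥0} {A : Set (IPath X)} (hA : MemFstopT τ A) {N : ℝ≥0}
    (hN : ∀ w, τ w ≤ N) : MeasurableSet[natF X N] A := by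
  have := hA.2 N
  have e : A ∩ {w | τ w ≤ N} = A := by
    ext w; simp [hN w]
  rwa [e] at this

lemma memF_gt {τ : IPath X → ℝ≥0} (hτ : IsStopT τ) (u : ℝ≥0) : MemFstopT τ {w | u < τ w} := by
  refine ⟨measurableSet_lt measurable_const hτ.measurable, fun r => ?_⟩
  rcases le_or_gt u r with h | h
  · have : {w : IPath X | u < τ w} ∩ {w | τ w ≤ r} = {w | τ w ≤ r} \ {w | τ w ≤ u} := by
      ext w
      simp only [mem_inter_iff, mem_ofPred_eq, Set.mem_sdiff, not_le]
      tauto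
    rw [this]
    exact (hτ r).diff (natF_mono h _ (hτ u))
  · have : {w : IPath X | u < τ w} ∩ {w | τ w ≤ r} = ∅ := by
      ext w
      simp only [mem_inter_iff, mem_ofPred_eq, mem_empty_iff_false, iff_false, not_and, not_le]
      intro h1
      exact h.trans h1
    rw [this]
    exact @MeasurableSet.empty _ (natF X r)

lemma KData.YY_restr (hD : KData C l ψ) (hs : MSel hD s) (n : ℕ) (x : X)
    {τ : IPath X → ℝ≥0} (hτ : IsStopT τ) {N : ℝ≥0} (hN : ∀ w, τ w ≤ N) {A : Set (IPath X)}
    (hA : MemFstopT τ A) :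
    ∫ w, hD.YY s n (restrT τ A N w) w ∂(s x : Measure (IPath X)) =
      ∫ w in A, hD.YY s n (τ w) w ∂(s x : Measure (IPath X)) := by
  have hm := (isStopT_restrT hA hN).measurable
  rw [← integral_add_compl hA.1 (integrable_of_meas_bdd (hD.measurable_YY hs.meas n hm)
    (fun w => hD.abs_YY_le n _ w))]
  have h1 : ∫ w in A, hD.YY s n (restrT τ A N w) w ∂(s x : Measure (IPath X)) =
      ∫ w in A, hD.YY s n (τ w) w ∂(s x : Measure (IPath X)) :=
    setIntegral_congr_fun hA.1 fun w hw => by simp only [restrT_mem hw]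
  have h2 : ∫ w in Aᶜ, hD.YY s n (restrT τ A N w) w ∂(s x : Measure (IPath X)) =
      ∫ w in Aᶜ, Real.exp (-l n * N) * (hD.G n (shC N w) - intBCF (hD.G n) (s (w N)))
        ∂(s x : Measure (IPath X)) :=
    setIntegral_congr_fun hA.1.compl fun w hw => by
      simp only [restrT_notMem hw]
      rfl
  have h3 := hs.simple_markov x N (memF_natF hA hN).compl (hD.G n).continuous.measurable
    (hD.G n).norm_coe_le_norm
  have h4 : ∫ w in Aᶜ, (hD.G n (shC N w) - intBCF (hD.G n) (s (w N)))
        ∂(s x : Measure (IPath X)) = 0 := by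
    rw [integral_sub, h3]
    · exact sub_self _
    · exact integrable_bcf_comp _ _ (continuous_shC N).measurable
    · exact integrable_of_meas_bdd ((measurable_intBCF_sel hs.meas (hD.G n)).comp (measurable_ev N))
        (fun w => abs_intBCF_le _ _)
  rw [h1, h2, integral_const_mul, h4, mul_zero, add_zero]

/-- integration against an increasing function -/
lemma layer {α : Type*} [MeasurableSpace α] {P : Measure α} [IsProbabilityMeasure P]
    {T : α → ℝ≥0} (hT : Measurable T) {N : ℝ≥0} (hN : ∀ w, T w ≤ N) {Y : α → ℝ} (hY : Measurable Y)
    {M : ℝ} (hM : ∀ w, |Y w| ≤ M) {a : ℝ} (ha : 0 < a)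
    (h : ∀ u : ℝ≥0, 0 ≤ ∫ w in {w | u < T w}, Y w ∂P) :
    ∫ w, Y w ∂P ≤ ∫ w, Real.exp (a * T w) * Y w ∂P := by
  have hTm : Measurable (fun w => (T w : ℝ)) := measurable_coe_nnreal_real.comp hT
  have hexp : ∀ w, Real.exp (a * T w) - 1 =
      ∫ u in Ioc (0 : ℝ) N, (if u < (T w : ℝ) then a * Real.exp (a * u) else 0) := by
    intro w
    have h1 : ∫ u in (0 : ℝ)..(T w), a * Real.exp (a * u) = Real.exp (a * T w) - 1 := by
      have := intervalIntegral.integral_eq_sub_of_hasDerivAt (a := 0) (b := (T w : ℝ))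
        (f := fun u => Real.exp (a * u)) (f' := fun u => a * Real.exp (a * u))
        (fun u _ => by
          have h2 : HasDerivAt (fun u : ℝ => a * u) a u := by
            simpa using (hasDerivAt_id u).const_mul a
          have := h2.exp
          rwa [mul_comm] at this)
        (Continuous.intervalIntegrable (by fun_prop) _ _)
      simpa using this
    rw [← h1, intervalIntegral.integral_of_le (T w).coe_nonneg, integral_Ioc_eq_integral_Ioo]
    have h2 : (fun u => if u < (T w : ℝ) then a * Real.exp (a * u) else 0) =
        (Iio (T w : ℝ)).indicator (fun u => a * Real.exp (a * u)) := by
      ext u; simp [Set.indicator_apply]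
    rw [h2, setIntegral_indicator measurableSet_Iio]
    have h3 : Ioc (0 : ℝ) N ∩ Iio (T w : ℝ) = Ioo (0 : ℝ) (T w) := by
      ext u
      simp only [mem_inter_iff, mem_Ioc, mem_Iio, mem_Ioo]
      have : (T w : ℝ) ≤ N := by exact_mod_cast hN w
      constructor
      · rintro ⟨⟨h1, h2⟩, h3⟩; exact ⟨h1, h3⟩
      · rintro ⟨h1, h3⟩; exact ⟨⟨h1, by linarith⟩, h3⟩
    rw [h3]
  have hb : ∀ w, |Real.exp (a * T w) * Y w| ≤ Real.exp (a * N) * M := by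
    intro w
    rw [abs_mul, abs_of_pos (Real.exp_pos _)]
    refine mul_le_mul ?_ (hM w) (abs_nonneg _) (Real.exp_pos _).le
    rw [Real.exp_le_exp]
    have : (T w : ℝ) ≤ N := by exact_mod_cast hN w
    gcongr
  have hi1 : Integrable (fun w => Real.exp (a * T w) * Y w) P :=
    integrable_of_meas_bdd (by fun_prop) hb
  have hi2 : Integrable Y P := integrable_of_meas_bdd hY hM
  rw [← sub_nonneg, ← integral_sub hi1 hi2]
  have e1 : ∫ w, (Real.exp (a * T w) * Y w - Y w) ∂P =
      ∫ w, (∫ u in Ioc (0 : ℝ) N,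
        (if u < (T w : ℝ) then a * Real.exp (a * u) else 0) * Y w) ∂P := by
    refine integral_congr_ae (Eventually.of_forall fun w => ?_)
    simp only
    rw [integral_mul_const, ← hexp]
    ring
  rw [e1, integral_integral_swap]
  · refine setIntegral_nonneg measurableSet_Ioc fun u hu => ?_
    have e2 : (fun w => (if u < (T w : ℝ) then a * Real.exp (a * u) else 0) * Y w) =
        {w | u.toNNReal < T w}.indicator (fun w => (a * Real.exp (a * u)) * Y w) := by
      ext w
      have : u < (T w : ℝ) ↔ u.toNNReal < T w := by
        rw [← NNReal.coe_lt_coe, Real.coe_toNNReal _ hu.1.le]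
      simp [Set.indicator_apply, this]
    rw [e2, integral_indicator (measurableSet_lt measurable_const hT), integral_const_mul]
    exact mul_nonneg (by positivity) (h _)
  · have hm : Measurable (fun p : α × ℝ =>
        (if p.2 < (T p.1 : ℝ) then a * Real.exp (a * p.2) else 0) * Y p.1) := by
      refine Measurable.mul ?_ (hY.comp measurable_fst)
      refine Measurable.ite (measurableSet_lt measurable_snd (hTm.comp measurable_fst)) ?_
        measurable_const
      fun_prop
    have : IsFiniteMeasure (volume.restrict (Ioc (0 : ℝ) N)) := by
      constructor
      simp
    refine Integrable.of_bound (C := (a * Real.exp (a * N)) * M) hm.aestronglyMeasurable ?_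
    have hae : ∀ᵐ p ∂(P.prod (volume.restrict (Ioc (0 : ℝ) N))), p.2 ∈ Ioc (0 : ℝ) N := by
      have := (Measure.quasiMeasurePreserving_snd (μ := P)
        (ν := volume.restrict (Ioc (0 : ℝ) N))).ae (ae_restrict_mem measurableSet_Ioc)
      exact this
    filter_upwards [hae] with p hp
    simp only [Function.uncurry]
    rw [norm_mul]
    refine mul_le_mul ?_ (hM _) (norm_nonneg _) (by positivity)
    have h5 : Real.exp (a * p.2) ≤ Real.exp (a * N) := by
      rw [Real.exp_le_exp]
      exact mul_le_mul_of_nonneg_left hp.2 ha.le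
    split_ifs
    · rw [Real.norm_of_nonneg (by positivity)]
      gcongr
    · rw [norm_zero]; positivity

lemma KData.strong_ind (hD : KData C l ψ) (hs : MSel hD s) (x : X) (n : ℕ) :
    ∀ τ : IPath X → ℝ≥0, ∀ hτ : IsStopT τ, (∀ w, 0 < τ w) → ∀ N : ℝ≥0, (∀ w, τ w ≤ N) →
      (∀ i < n, ∫ w, hD.YY s i (τ w) w ∂(s x : Measure (IPath X)) = 0) ∧
      shP hτ.measurable (s x) ∈ KsetT (lexC C hD.G n) (s x) τ := by
  induction n with
  | zero =>
    intro τ hτ hτ0 N hN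
    exact ⟨fun i hi => absurd hi (Nat.not_lt_zero i),
      hD.shiftK x (s x) (hs.memC x) τ hτ hτ0 _ (isShift_shP hτ.measurable (s x))⟩
  | succ n ih =>
    intro τ hτ hτ0 N hN
    have hτm := hτ.measurable
    obtain ⟨h0, hK⟩ := ih τ hτ hτ0 N hN
    have hN0 : 0 < N := (hτ0 (ContinuousMap.const _ x)).trans_le (hN _)
    have hpos := hD.YY_nonneg hs n x hτ hτ0 hN h0
    have hu : ∀ u : ℝ≥0, 0 ≤ ∫ w in {w | u < τ w}, hD.YY s n (τ w) w
        ∂(s x : Measure (IPath X)) := by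
      intro u
      have hA := memF_gt hτ u
      rw [← hD.YY_restr hs n x hτ hN hA]
      have hst := isStopT_restrT hA hN
      have h1 : ∀ w, 0 < restrT τ {w | u < τ w} N w := by
        intro w
        by_cases hw : w ∈ {w | u < τ w}
        · rw [restrT_mem hw]; exact hτ0 w
        · rw [restrT_notMem hw]; exact hN0
      have h2 : ∀ w, restrT τ {w | u < τ w} N w ≤ N := by
        intro w
        by_cases hw : w ∈ {w | u < τ w}
        · rw [restrT_mem hw]; exact hN w
        · rw [restrT_notMem hw]
      exact hD.YY_nonneg hs n x hst h1 h2 (ih _ hst h1 N h2).1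
    have hlay := layer hτm hN (hD.measurable_YY hs.meas n hτm) (fun w => hD.abs_YY_le n _ w)
      (hD.lpos n) hu
    have e1 : ∀ w, Real.exp (l n * τ w) * hD.YY s n (τ w) w = hD.DD s n (τ w) w := by
      intro w
      unfold KData.YY
      rw [← mul_assoc, ← Real.exp_add]
      have : l n * (τ w : ℝ) + -l n * τ w = 0 := by ring
      rw [this, Real.exp_zero, one_mul]
    simp_rw [e1] at hlay
    have e2 : ∫ w, hD.DD s n (τ w) w ∂(s x : Measure (IPath X)) =
        intBCF (hD.G n) (shP hτm (s x)) -
          ∫ w, hSupp (lexC C hD.G n) (piAt τ w) (hD.G n) ∂(s x : Measure (IPath X)) := by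
      rw [intBCF_of_isShift hτm (isShift_shP hτm (s x)), ← integral_sub]
      · refine integral_congr_ae (Eventually.of_forall fun w => ?_)
        simp only
        rw [← lexInf_eq_hSupp (hs.mem (piAt τ w)) n]
        rfl
      · exact integrable_bcf_comp _ _ (measurable_shiftAt hτm)
      · exact (hD.nice.lexC hD.G n).integrable_hSupp _ _ (measurable_piAt hτm)
    have hKn := hK (hD.G n)
    refine ⟨fun i hi => ?_, ?_⟩
    · rcases Nat.lt_succ_iff_lt_or_eq.1 hi with h | rfl
      · exact h0 i h
      · linarith
    · exact K_face (hD.nice.lexC hD.G n) hτm hK (hD.G n) (by linarith)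

lemma KData.strong_bdd (hD : KData C l ψ) (hs : MSel hD s) (x : X) {τ : IPath X → ℝ≥0}
    (hτ : IsStopT τ) (hτ0 : ∀ w, 0 < τ w) {N : ℝ≥0} (hN : ∀ w, τ w ≤ N) (f : (IPath X) →ᵇ ℝ) :
    ∫ w, f (shiftAt τ w) ∂(s x : Measure (IPath X)) =
      ∫ w, intBCF f (s (piAt τ w)) ∂(s x : Measure (IPath X)) := by
  have hτm := hτ.measurable
  have hN' := hD.nice.lexInf hD.G
  have hR : shP hτm (s x) ∈ KsetT (lexInf C hD.G) (s x) τ :=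
    K_iInter (hD.nice.lexC hD.G) (lexC_succ_subset C hD.G) hτm
      (fun n => (hD.strong_ind hs x n τ hτ hτ0 N hN).2)
  have h1 := hR f
  have h2 := hR (-f)
  rw [intBCF_neg] at h2
  have hh1 : ∀ y, hSupp (lexInf C hD.G) y f = intBCF f (s y) := by
    intro y
    obtain ⟨Q, hQ, h⟩ := hN'.exists_max y f
    rw [← h, hs.uniq y Q hQ]
  have hh2 : ∀ y, hSupp (lexInf C hD.G) y (-f) = -intBCF f (s y) := by
    intro y
    obtain ⟨Q, hQ, h⟩ := hN'.exists_max y (-f)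
    rw [← h, intBCF_neg, hs.uniq y Q hQ]
  simp_rw [hh1] at h1
  simp_rw [hh2] at h2
  rw [integral_neg] at h2
  rw [intBCF_of_isShift hτm (isShift_shP hτm (s x)) f] at h1 h2
  exact le_antisymm h1 (neg_le_neg_iff.1 h2)

end strong

section final

variable [PolishSpace X] [MeasurableSpace X] [BorelSpace X]
variable {C : X → Set (ProbabilityMeasure (IPath X))} {l : ℕ → ℝ} {ψ : ℕ → X →ᵇ ℝ}
variable {hD : KData C l ψ} {s : X → ProbabilityMeasure (IPath X)}

lemma MSel.measurable_apply (hs : MSel hD s) {B : Set (IPath X)} (hB : MeasurableSet B) :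
    Measurable (fun y => (s y : Measure (IPath X)) B) :=
  (Measure.measurable_coe hB).comp hs.meas

lemma MSel.simple_meas (hs : MSel hD s) (x : X) (t : ℝ≥0) {A : Set (IPath X)}
    (hA : MeasurableSet[natF X t] A) {B : Set (IPath X)} (hB : MeasurableSet B) :
    (s x : Measure (IPath X)) (A ∩ shC t ⁻¹' B) =
      ∫⁻ w in A, (s (w t) : Measure (IPath X)) B ∂(s x : Measure (IPath X)) := by
  have hA' : MeasurableSet A := natF_le t _ hA
  have hθ : MeasurableSet (shC t ⁻¹' B) := (continuous_shC t).measurable hB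
  have h := hs.simple_markov x t hA (F := B.indicator fun _ => (1 : ℝ))
    (measurable_const.indicator hB) (M := 1) (fun w => by
      by_cases hw : w ∈ B
      · rw [indicator_of_mem hw]; simp
      · rw [indicator_of_notMem hw]; simp)
  have e1 : (fun w => B.indicator (fun _ => (1 : ℝ)) (shC t w)) =
      (shC t ⁻¹' B).indicator fun _ => (1 : ℝ) := rfl
  have e2 : ∀ y, ∫ v, B.indicator (fun _ => (1 : ℝ)) v ∂(s y : Measure (IPath X)) =
      ((s y : Measure (IPath X)) B).toReal := by
    intro y
    rw [integral_indicator_const _ hB]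
    simp [Measure.real]
  rw [e1, integral_indicator_const _ hθ] at h
  simp_rw [e2] at h
  rw [integral_toReal] at h
  · simp only [smul_eq_mul, mul_one, Measure.real] at h
    rw [Measure.restrict_apply hθ, inter_comm, ENNReal.toReal_eq_toReal_iff'] at h
    · exact h
    · exact measure_ne_top _ _
    · refine ne_of_lt (lt_of_le_of_lt (lintegral_mono fun w => prob_le_one) ?_)
      simp
  · exact ((hs.measurable_apply hB).comp (measurable_ev t)).aemeasurable
  · exact Eventually.of_forall fun w => measure_lt_top _ _

lemma MSel.strong_meas (hs : MSel hD s) (x : X) {τ : IPath X → ℝ≥0}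
    (hτ : IsStopT τ) (hτ0 : ∀ w, 0 < τ w) {N : ℝ≥0} (hN : ∀ w, τ w ≤ N) {B : Set (IPath X)}
    (hB : MeasurableSet B) :
    (s x : Measure (IPath X)) (shiftAt τ ⁻¹' B) =
      ∫⁻ w, (s (piAt τ w) : Measure (IPath X)) B ∂(s x : Measure (IPath X)) := by
  have hτm := hτ.measurable
  have h := hs.measure_eq (measurable_piAt hτm) (measurable_shiftAt hτm) (s x)
    (hD.strong_bdd hs x hτ hτ0 hN)
  rw [← Measure.map_apply (measurable_shiftAt hτm) hB, h, Measure.snd_compProd,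
    Measure.bind_apply hB (Kernel.aemeasurable _)]
  rfl

lemma MSel.strong_pos_bdd (hs : MSel hD s) (x : X) {τ : IPath X → ℝ≥0}
    (hτ0 : ∀ w, 0 < τ w) {N : ℝ≥0} (hN : ∀ w, τ w ≤ N) {A : Set (IPath X)}
    (hA : MemFstopT τ A) {B : Set (IPath X)} (hB : MeasurableSet B) :
    (s x : Measure (IPath X)) (A ∩ shiftAt τ ⁻¹' B) =
      ∫⁻ w in A, (s (piAt τ w) : Measure (IPath X)) B ∂(s x : Measure (IPath X)) := by
  have hN0 : 0 < N := (hτ0 (ContinuousMap.const _ x)).trans_le (hN _)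
  have hst := isStopT_restrT hA hN
  have h1 : ∀ w, 0 < restrT τ A N w := by
    intro w
    by_cases hw : w ∈ A
    · rw [restrT_mem hw]; exact hτ0 w
    · rw [restrT_notMem hw]; exact hN0
  have h2 : ∀ w, restrT τ A N w ≤ N := by
    intro w
    by_cases hw : w ∈ A
    · rw [restrT_mem hw]; exact hN w
    · rw [restrT_notMem hw]
  have h := hs.strong_meas x hst h1 h2 hB
  have h3 := hs.simple_meas x N (memF_natF hA hN).compl hB
  rw [← measure_inter_add_diff _ hA.1, ← lintegral_add_compl _ hA.1] at h
  have e1 : shiftAt (restrT τ A N) ⁻¹' B ∩ A = A ∩ shiftAt τ ⁻¹' B := by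
    ext w
    simp only [mem_inter_iff, mem_preimage, shiftAt_eq]
    constructor
    · rintro ⟨ha, hw⟩; rw [restrT_mem hw] at ha; exact ⟨hw, ha⟩
    · rintro ⟨hw, ha⟩; rw [restrT_mem hw]; exact ⟨ha, hw⟩
  have e2 : shiftAt (restrT τ A N) ⁻¹' B \ A = Aᶜ ∩ shC N ⁻¹' B := by
    ext w
    simp only [mem_inter_iff, mem_preimage, shiftAt_eq, Set.mem_sdiff, mem_compl_iff]
    constructor
    · rintro ⟨ha, hw⟩; rw [restrT_notMem hw] at ha; exact ⟨hw, ha⟩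
    · rintro ⟨hw, ha⟩; rw [restrT_notMem hw]; exact ⟨ha, hw⟩
  have e3 : ∫⁻ w in A, (s (piAt (restrT τ A N) w) : Measure (IPath X)) B
      ∂(s x : Measure (IPath X)) =
      ∫⁻ w in A, (s (piAt τ w) : Measure (IPath X)) B ∂(s x : Measure (IPath X)) :=
    setLIntegral_congr_fun hA.1 fun w hw => by simp only [piAt, restrT_mem hw]
  have e4 : ∫⁻ w in Aᶜ, (s (piAt (restrT τ A N) w) : Measure (IPath X)) B
      ∂(s x : Measure (IPath X)) =
      ∫⁻ w in Aᶜ, (s (w N) : Measure (IPath X)) B ∂(s x : Measure (IPath X)) :=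
    setLIntegral_congr_fun hA.1.compl fun w hw => by simp only [piAt, restrT_notMem hw]
  rw [e1, e2, e3, e4, h3] at h
  refine (ENNReal.add_left_inj ?_).1 h
  rw [← h3]
  exact measure_ne_top _ _

lemma MSel.strong_pos (hs : MSel hD s) (x : X) {τ : IPath X → ℝ≥0} (hτ : IsStopT τ)
    (hτ0 : ∀ w, 0 < τ w) {A : Set (IPath X)}
    (hA : MemFstopT τ A) {B : Set (IPath X)} (hB : MeasurableSet B) :
    (s x : Measure (IPath X)) (A ∩ shiftAt τ ⁻¹' B) =
      ∫⁻ w in A, (s (piAt τ w) : Measure (IPath X)) B ∂(s x : Measure (IPath X)) := by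
  have hτm := hτ.measurable
  let Ak : ℕ → Set (IPath X) := fun k => A ∩ {w | τ w ≤ ((k + 1 : ℕ) : ℝ≥0)}
  have hAkm : ∀ k, MeasurableSet (Ak k) := fun k =>
    hA.1.inter (measurableSet_le hτm measurable_const)
  have hmono : Monotone Ak := by
    intro i j hij w hw
    have h2 : τ w ≤ ((i + 1 : ℕ) : ℝ≥0) := hw.2
    refine ⟨hw.1, ?_⟩
    change τ w ≤ ((j + 1 : ℕ) : ℝ≥0)
    refine h2.trans ?_
    exact_mod_cast Nat.succ_le_succ hij
  have hU : ⋃ k, Ak k = A := by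
    ext w
    simp only [mem_iUnion]
    constructor
    · rintro ⟨k, hk⟩; exact hk.1
    · intro hw
      obtain ⟨k, hk⟩ := exists_nat_ge (τ w)
      refine ⟨k, hw, hk.trans ?_⟩
      exact_mod_cast Nat.le_succ k
  have hk : ∀ k, (s x : Measure (IPath X)) (Ak k ∩ shiftAt τ ⁻¹' B) =
      ∫⁻ w in Ak k, (s (piAt τ w) : Measure (IPath X)) B ∂(s x : Measure (IPath X)) := by
    intro k
    let σ : IPath X → ℝ≥0 := fun w => min (τ w) ((k + 1 : ℕ) : ℝ≥0)
    have hσA : ∀ w ∈ Ak k, σ w = τ w := fun w hw => min_eq_left hw.2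
    have hmem : MemFstopT σ (Ak k) := by
      refine ⟨hAkm k, fun r => ?_⟩
      have : Ak k ∩ {w | σ w ≤ r} = A ∩ {w | τ w ≤ min ((k + 1 : ℕ) : ℝ≥0) r} := by
        ext w
        simp only [mem_inter_iff, mem_ofPred_eq, le_min_iff, Ak]
        constructor
        · rintro ⟨⟨h1, h2⟩, h3⟩
          refine ⟨h1, h2, ?_⟩
          rwa [hσA w ⟨h1, h2⟩] at h3
        · rintro ⟨h1, h2, h3⟩
          exact ⟨⟨h1, h2⟩, (min_le_left _ _).trans h3⟩
      rw [this]
      exact natF_mono (min_le_right _ _) _ (hA.2 _)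
    have h := hs.strong_pos_bdd x (τ := σ) (N := ((k + 1 : ℕ) : ℝ≥0))
      (fun w => lt_min (hτ0 w) (by positivity)) (fun w => min_le_right _ _) hmem hB
    have e1 : Ak k ∩ shiftAt σ ⁻¹' B = Ak k ∩ shiftAt τ ⁻¹' B := by
      ext w
      simp only [mem_inter_iff, mem_preimage, shiftAt_eq]
      constructor
      · rintro ⟨hw, ha⟩; rw [hσA w hw] at ha; exact ⟨hw, ha⟩
      · rintro ⟨hw, ha⟩; rw [hσA w hw]; exact ⟨hw, ha⟩
    have e3 : ∫⁻ w in Ak k, (s (piAt σ w) : Measure (IPath X)) B ∂(s x : Measure (IPath X)) =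
        ∫⁻ w in Ak k, (s (piAt τ w) : Measure (IPath X)) B ∂(s x : Measure (IPath X)) :=
      setLIntegral_congr_fun (hAkm k) fun w hw => by simp only [piAt, hσA w hw]
    rw [← e1, h, e3]
  have t1 := tendsto_measure_iUnion_atTop
    (μ := (s x : Measure (IPath X)).restrict (shiftAt τ ⁻¹' B)) hmono
  have t2 := tendsto_measure_iUnion_atTop
    (μ := (s x : Measure (IPath X)).withDensity
      (fun w => (s (piAt τ w) : Measure (IPath X)) B)) hmono
  rw [hU] at t1 t2
  have e : (((s x : Measure (IPath X)).restrict (shiftAt τ ⁻¹' B)) ∘ Ak) =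
      (((s x : Measure (IPath X)).withDensity
      (fun w => (s (piAt τ w) : Measure (IPath X)) B)) ∘ Ak) := by
    ext k
    simp only [Function.comp]
    rw [Measure.restrict_apply (hAkm k), withDensity_apply _ (hAkm k)]
    exact hk k
  rw [e] at t1
  have := tendsto_nhds_unique t1 t2
  rwa [Measure.restrict_apply hA.1, withDensity_apply _ hA.1] at this

lemma MSel.strong (hs : MSel hD s) (x : X) {τ : IPath X → ℝ≥0} (hτ : IsStopT τ)
    {A : Set (IPath X)} (hA : MemFstopT τ A) {B : Set (IPath X)} (hB : MeasurableSet B) :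
    (s x : Measure (IPath X)) (A ∩ shiftAt τ ⁻¹' B) =
      ∫⁻ w in A, (s (piAt τ w) : Measure (IPath X)) B ∂(s x : Measure (IPath X)) := by
  have hτm := hτ.measurable
  let Z : Set (IPath X) := {w | 0 < τ w}
  have hZ : MeasurableSet Z := measurableSet_lt measurable_const hτm
  have hZc : Zᶜ = {w | τ w ≤ 0} := by
    ext w; simp [Z]
  let σ := restrT τ Z 1
  have hσ0 : ∀ w, 0 < σ w := by
    intro w
    by_cases hw : w ∈ Z
    · simp only [σ]; rw [restrT_mem hw]; exact hw
    · simp only [σ]; rw [restrT_notMem hw]; exact zero_lt_one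
  have hZn : ∀ r, MeasurableSet[natF X r] Zᶜ := fun r => by
    rw [hZc]; exact natF_mono zero_le _ (hτ 0)
  have hσ : IsStopT σ := by
    intro r
    by_cases hr : 1 ≤ r
    · have : {w | σ w ≤ r} = {w | τ w ≤ r} ∪ Zᶜ := by
        ext w
        by_cases hw : w ∈ Z
        · simp [σ, restrT_mem hw, hw]
        · simp [σ, restrT_notMem hw, hw, hr]
      rw [this]
      exact (hτ r).union (hZn r)
    · have : {w | σ w ≤ r} = {w | τ w ≤ r} ∩ Zᶜᶜ := by
        ext w
        by_cases hw : w ∈ Z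
        · simp [σ, restrT_mem hw, hw]
        · simp [σ, restrT_notMem hw, hw, hr]
      rw [this]
      exact (hτ r).inter (hZn r).compl
  have hA1 : MemFstopT σ (A ∩ Z) := by
    refine ⟨hA.1.inter hZ, fun r => ?_⟩
    have : A ∩ Z ∩ {w | σ w ≤ r} = A ∩ {w | τ w ≤ r} ∩ Zᶜᶜ := by
      ext w
      by_cases hw : w ∈ Z
      · simp [σ, restrT_mem hw, hw]
      · simp [hw]
    rw [this]
    exact (hA.2 r).inter (hZn r).compl
  have hA0 : MeasurableSet[natF X 0] (A ∩ Zᶜ) := by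
    rw [hZc]; exact hA.2 0
  have h1 := hs.strong_pos x hσ hσ0 hA1 hB
  have h0 := hs.simple_meas x 0 hA0 hB
  have e1 : A ∩ Z ∩ shiftAt σ ⁻¹' B = A ∩ shiftAt τ ⁻¹' B ∩ Z := by
    ext w
    by_cases hw : w ∈ Z
    · simp [σ, shiftAt_eq, restrT_mem hw, hw]
    · simp [hw]
  have hτz : ∀ w ∈ Zᶜ, τ w = 0 := fun w hw => by
    rw [hZc] at hw; exact le_antisymm hw zero_le
  have e0 : A ∩ Zᶜ ∩ shC 0 ⁻¹' B = (A ∩ shiftAt τ ⁻¹' B) \ Z := by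
    ext w
    by_cases hw : w ∈ Z
    · simp [hw]
    · simp [shiftAt_eq, hτz w hw, hw]
  have e3 : ∫⁻ w in A ∩ Z, (s (piAt σ w) : Measure (IPath X)) B ∂(s x : Measure (IPath X)) =
      ∫⁻ w in A ∩ Z, (s (piAt τ w) : Measure (IPath X)) B ∂(s x : Measure (IPath X)) :=
    setLIntegral_congr_fun (hA.1.inter hZ) fun w hw => by
      simp only [piAt, σ, restrT_mem hw.2]
  have e4 : ∫⁻ w in A ∩ Zᶜ, (s (w 0) : Measure (IPath X)) B ∂(s x : Measure (IPath X)) =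
      ∫⁻ w in A ∩ Zᶜ, (s (piAt τ w) : Measure (IPath X)) B ∂(s x : Measure (IPath X)) :=
    setLIntegral_congr_fun (hA.1.inter hZ.compl) fun w hw => by
      simp only [piAt, hτz w hw.2]
  rw [e1, e3] at h1
  rw [e0, e4] at h0
  rw [← measure_inter_add_diff _ hZ, h1, h0, ← diff_eq]
  exact lintegral_inter_add_diff _ _ hZ

end final

end KrylovProof

/-- **Every strong Krylov set-valued map admits a strong Markov selection:** a
measurable selection `x ↦ P_x ∈ 𝒞(x)` such that for every finite stopping time `τ`,
`P_x[θ_τ⁻¹(·) | ℱ_τ](w) = P_{π_τ(w)}(·)` for `P_x`-a.e. `w`. -/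
theorem strong_krylov_strong_markov_selection
    {X : Type*} [TopologicalSpace X] [PolishSpace X] [MeasurableSpace X] [BorelSpace X]
    (lam : ℕ → ℝ) (phi : ℕ → X → ℝ) (hdata : GoodData lam phi)
    (C : X → Set (ProbabilityMeasure (IPath X)))
    (hK : IsStrongKrylov C lam phi) :
    ∃ sel : X → ProbabilityMeasure (IPath X),
      (∀ U : Set (ProbabilityMeasure (IPath X)), IsOpen U →
        MeasurableSet (sel ⁻¹' U)) ∧
      (∀ x, sel x ∈ C x) ∧
      ∀ x, ∀ τ : IPath X → ℝ≥0, IsStopT τ →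
        ∀ A : Set (IPath X), MemFstopT τ A →
          ∀ B : Set (IPath X), MeasurableSet B →
            (sel x : Measure (IPath X)) (A ∩ shiftAt τ ⁻¹' B) =
              ∫⁻ w in A, (sel (piAt τ w) : Measure (IPath X)) B
                ∂(sel x : Measure (IPath X)) := by
  obtain ⟨l, ψ, hD⟩ := exists_KData hdata hK
  obtain ⟨s, hs, hopen⟩ := hD.exists_MSel
  exact ⟨s, hopen, hs.memC, fun x τ hτ A hA B hB => hs.strong x hτ hA hB⟩
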